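/- Let A be a commutative ring, B an A-algebra, M a B-module, and B' a B-algebra of finite presentation that is faithfully flat over B. If M ⊗_B B', viewed as a B'-module, is intrinsically of finite presentation over A, then M is intrinsically of finite presentation over A. -/

import Mathlib

/-- An `S`-module `N` is *intrinsically of finite presentation* over `R` if there exist an
`n : ℕ` and an `R`-algebra homomorphism `f : R[x₁, …, xₙ] → S` from a polynomial ring over `R`
such that `N`, viewed as an `R[x₁, …, xₙ]`-module via restriction of scalars along `f`, is
finitely presented. -/
def Module.IntrinsicallyFinitePresentation (R S N : Type*) [CommRing R] [CommRing S]
    [Algebra R S] [AddCommGroup N] [Module S N] : Prop :=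
  ∃ (n : ℕ) (f : MvPolynomial (Fin n) R →ₐ[R] S),
    letI : Module (MvPolynomial (Fin n) R) N := Module.compHom N f.toRingHom
    Module.FinitePresentation (MvPolynomial (Fin n) R) N

open TensorProduct

namespace IFP
universe u

/-- `N` is flat after inverting `f`, formulated with elements. -/
def AFlat (R : Type u) [CommRing R] (f : R) (N : Type u) [AddCommGroup N] [Module R N] : Prop :=
  ∀ (X Y : Type u) [AddCommGroup X] [AddCommGroup Y] [Module R X] [Module R Y] (g : X →ₗ[R] Y),
    Function.Injective g → ∀ z : N ⊗[R] X, g.lTensor N z = 0 → ∃ n : ℕ, f ^ n • z = 0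

section
variable {R : Type u} [CommRing R] {f : R} {N N' N'' : Type u} [AddCommGroup N] [Module R N]
  [AddCommGroup N'] [Module R N'] [AddCommGroup N''] [Module R N'']

lemma AFlat.of_dvd {g : R} (h : AFlat R f N) (hfg : f ∣ g) : AFlat R g N := by
  intro X Y _ _ _ _ k hk z hz
  obtain ⟨n, hn⟩ := h X Y k hk z hz
  obtain ⟨c, rfl⟩ := hfg
  exact ⟨n, by rw [mul_pow, mul_comm, mul_smul, hn, smul_zero]⟩

lemma AFlat.of_flat [Module.Flat R N] : AFlat R f N := by
  intro X Y _ _ _ _ k hk z hz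
  refine ⟨0, ?_⟩
  have := Module.Flat.lTensor_preserves_injective_linearMap (M := N) k hk
  rw [(injective_iff_map_eq_zero _).1 this z hz, smul_zero]

lemma AFlat.of_torsion (h : ∀ x : N, f • x = 0) : AFlat R f N := by
  intro X Y _ _ _ _ k hk z hz
  refine ⟨1, ?_⟩
  rw [pow_one]
  induction z using TensorProduct.induction_on with
  | zero => simp
  | tmul x y => rw [TensorProduct.smul_tmul', h, TensorProduct.zero_tmul]
  | add x y hx hy =>
    clear hz
    have key : ∀ w : N ⊗[R] X, f • w = 0 := by
      intro w
      induction w using TensorProduct.induction_on with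
      | zero => simp
      | tmul x y => rw [TensorProduct.smul_tmul', h, TensorProduct.zero_tmul]
      | add x y hx hy => rw [smul_add, hx, hy, add_zero]
    exact key _

lemma AFlat.of_equiv (e : N ≃ₗ[R] N') (h : AFlat R f N) : AFlat R f N' := by
  intro X Y _ _ _ _ k hk z hz
  obtain ⟨n, hn⟩ := h X Y k hk (e.symm.toLinearMap.rTensor X z) (by
    rw [← LinearMap.comp_apply, LinearMap.lTensor_comp_rTensor, ← LinearMap.rTensor_comp_lTensor,
      LinearMap.comp_apply, hz, map_zero])
  refine ⟨n, ?_⟩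
  have := congrArg (e.toLinearMap.rTensor X) hn
  rw [map_smul, map_zero, ← LinearMap.comp_apply, ← LinearMap.rTensor_comp] at this
  simpa using this

lemma AFlat.ker_torsion_aux {i : N' →ₗ[R] N} {p : N →ₗ[R] N''} (hi : Function.Injective i)
    (hp : Function.Surjective p) (hip : Function.Exact i p) (h : AFlat R f N'')
    {X F G : Type u} [AddCommGroup X] [Module R X] [AddCommGroup F] [Module R F]
    [AddCommGroup G] [Module R G] [Module.Flat R F] {j : G →ₗ[R] F} {π : F →ₗ[R] X}
    (hj : Function.Injective j) (hπ : Function.Surjective π) (hex : Function.Exact j π)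
    (w : N' ⊗[R] X) (hw : i.rTensor X w = 0) :
    ∃ n : ℕ, f ^ n • w = 0 := by
  obtain ⟨w', rfl⟩ := LinearMap.lTensor_surjective N' hπ w
  have h1 : π.lTensor N (i.rTensor F w') = 0 := by
    rw [← hw, ← LinearMap.comp_apply, ← LinearMap.comp_apply, LinearMap.lTensor_comp_rTensor,
      LinearMap.rTensor_comp_lTensor]
  obtain ⟨g, hg⟩ := (lTensor_exact N hex hπ _).1 h1
  obtain ⟨n, hn⟩ := h G F j hj (p.rTensor G g) (by
    rw [← LinearMap.comp_apply, LinearMap.lTensor_comp_rTensor, ← LinearMap.rTensor_comp_lTensor,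
      LinearMap.comp_apply, hg, ← LinearMap.comp_apply, ← LinearMap.rTensor_comp,
      hip.linearMap_comp_eq_zero]
    simp)
  rw [← map_smul] at hn
  obtain ⟨g', hg'⟩ := (rTensor_exact G hip hp _).1 hn
  have h2 : f ^ n • w' = j.lTensor N' g' := by
    have hinj : Function.Injective (i.rTensor F) :=
      Module.Flat.rTensor_preserves_injective_linearMap i hi
    apply hinj
    rw [map_smul, ← hg, ← map_smul, ← hg', ← LinearMap.comp_apply, ← LinearMap.comp_apply,
      LinearMap.lTensor_comp_rTensor, LinearMap.rTensor_comp_lTensor]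
  refine ⟨n, ?_⟩
  rw [← map_smul, h2]
  exact (lTensor_exact N' hex hπ _).2 ⟨g', rfl⟩

lemma AFlat.ker_torsion {i : N' →ₗ[R] N} {p : N →ₗ[R] N''} (hi : Function.Injective i)
    (hp : Function.Surjective p) (hip : Function.Exact i p) (h : AFlat R f N'')
    (X : Type u) [AddCommGroup X] [Module R X] (w : N' ⊗[R] X) (hw : i.rTensor X w = 0) :
    ∃ n : ℕ, f ^ n • w = 0 :=
  h.ker_torsion_aux hi hp hip (Submodule.injective_subtype _)
    (Finsupp.linearCombination_id_surjective R X)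
    (LinearMap.exact_subtype_ker_map (Finsupp.linearCombination R (id : X → X))) w hw

lemma AFlat.extension {i : N' →ₗ[R] N} {p : N →ₗ[R] N''} (hi : Function.Injective i)
    (hp : Function.Surjective p) (hip : Function.Exact i p) (h' : AFlat R f N')
    (h : AFlat R f N'') : AFlat R f N := by
  intro X Y _ _ _ _ k hk z hz
  obtain ⟨n, hn⟩ := h X Y k hk (p.rTensor X z) (by
    rw [← LinearMap.comp_apply, LinearMap.lTensor_comp_rTensor, ← LinearMap.rTensor_comp_lTensor,
      LinearMap.comp_apply, hz, map_zero])
  rw [← map_smul] at hn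
  obtain ⟨w, hw⟩ := (rTensor_exact X hip hp _).1 hn
  obtain ⟨m, hm⟩ := h.ker_torsion hi hp hip Y (k.lTensor N' w) (by
    rw [← LinearMap.comp_apply, LinearMap.rTensor_comp_lTensor, ← LinearMap.lTensor_comp_rTensor,
      LinearMap.comp_apply, hw, map_smul, hz, smul_zero])
  rw [← map_smul] at hm
  obtain ⟨l, hl⟩ := h' X Y k hk _ hm
  refine ⟨l + m + n, ?_⟩
  rw [pow_add, pow_add, mul_smul, mul_smul, ← hw, ← map_smul, ← map_smul, hl, map_zero]

lemma AFlat.of_union (Q : ℕ → Submodule R N) (hQ : Monotone Q) (hU : ∀ x, ∃ i, x ∈ Q i)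
    (h : ∀ i, AFlat R f (Q i)) : AFlat R f N := by
  have hfg : ∀ P : Submodule R N, P.FG → ∃ i, P ≤ Q i := by
    rintro P ⟨s, rfl⟩
    choose φ hφ using hU
    refine ⟨s.sup φ, Submodule.span_le.2 fun x hx => hQ (Finset.le_sup hx) (hφ x)⟩
  intro X Y _ _ _ _ k hk z hz
  obtain ⟨P, hP, z', rfl⟩ := TensorProduct.exists_of_fg z
  have h1 : P.subtype.rTensor Y (k.lTensor P z') = 0 := by
    rw [← hz, ← LinearMap.comp_apply, ← LinearMap.comp_apply, LinearMap.lTensor_comp_rTensor,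
      LinearMap.rTensor_comp_lTensor]
  obtain ⟨P', hPP', hP', h2⟩ := TensorProduct.eq_zero_of_fg_of_subtype_eq_zero hP h1
  obtain ⟨i, hi⟩ := hfg P' hP'
  have hPi := hPP'.trans hi
  obtain ⟨n, hn⟩ := h i X Y k hk ((Submodule.inclusion hPi).rTensor X z') (by
    rw [← LinearMap.comp_apply, LinearMap.lTensor_comp_rTensor, ← LinearMap.rTensor_comp_lTensor,
      LinearMap.comp_apply]
    have : Submodule.inclusion hPi = Submodule.inclusion hi ∘ₗ Submodule.inclusion hPP' := rfl
    rw [this, LinearMap.rTensor_comp, LinearMap.comp_apply, h2, map_zero])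
  refine ⟨n, ?_⟩
  have := congrArg ((Q i).subtype.rTensor X) hn
  rw [map_smul, map_zero, ← LinearMap.comp_apply, ← LinearMap.rTensor_comp] at this
  exact this

end

/-- generic flatness for `S` over `R`. -/
def GFree (R S : Type u) [CommRing R] [CommRing S] [Algebra R S] : Prop :=
  ∀ (N : Type u) [AddCommGroup N] [Module R N] [Module S N] [IsScalarTower R S N]
    [Module.Finite S N], ∃ f : R, f ≠ 0 ∧ AFlat R f N

lemma GFree.self (R : Type u) [CommRing R] [IsDomain R] [IsNoetherianRing R] : GFree R R := by
  intro N _ m1 m2 hs hfin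
  have : m1 = m2 := by
    ext r x
    have h1 := hs.smul_assoc r 1 x
    have h2 : (1 : R) • x = x := one_smul R x
    rw [smul_eq_mul, mul_one, h2] at h1
    exact h1.symm
  subst this
  clear hs
  induction hfin using IsNoetherianRing.induction_on_isQuotientEquivQuotientPrime R with
  | subsingleton N =>
    exact ⟨1, one_ne_zero, AFlat.of_torsion fun x => Subsingleton.elim _ _⟩
  | quotient N p e =>
    by_cases hp : p.1 = ⊥
    · refine ⟨1, one_ne_zero, ?_⟩
      have e' : N ≃ₗ[R] R := e.trans ((Submodule.quotEquivOfEq _ _ hp).trans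
        (Submodule.quotEquivOfEqBot ⊥ rfl))
      exact AFlat.of_equiv e'.symm AFlat.of_flat
    · obtain ⟨f, hf, hf0⟩ := Submodule.exists_mem_ne_zero_of_ne_bot hp
      refine ⟨f, hf0, AFlat.of_torsion fun x => ?_⟩
      apply e.injective
      rw [map_smul, map_zero]
      obtain ⟨y, hy⟩ := Ideal.Quotient.mk_surjective (e x)
      rw [← hy, ← Ideal.Quotient.mk_eq_mk, ← Submodule.Quotient.mk_smul,
        Submodule.Quotient.mk_eq_zero]
      exact p.1.mul_mem_right _ hf
  | exact N₁ N₂ N₃ i p hi hp hip h₁ h₃ =>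
    obtain ⟨f, hf, h₁⟩ := h₁
    obtain ⟨g, hg, h₃⟩ := h₃
    exact ⟨f * g, mul_ne_zero hf hg, AFlat.extension hi hp hip (h₁.of_dvd (dvd_mul_right _ _))
      (h₃.of_dvd (dvd_mul_left _ _))⟩

lemma GFree.of_surjective {R S T : Type u} [CommRing R] [CommRing S] [CommRing T] [Algebra R S]
    [Algebra R T] (φ : S →ₐ[R] T) (hφ : Function.Surjective φ) (h : GFree R S) : GFree R T := by
  intro N _ _ _ _ _
  let _ : Module S N := Module.compHom N φ.toRingHom
  have : IsScalarTower R S N := ⟨fun r s x => by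
    change φ (r • s) • x = r • (φ s • x)
    rw [map_smul, smul_assoc]⟩
  let _ : Algebra S T := φ.toRingHom.toAlgebra
  have : IsScalarTower S T N := ⟨fun r s x => by
    change (φ r * s) • x = φ r • (s • x)
    rw [mul_smul]⟩
  have : Module.Finite S T := Module.Finite.of_surjective (Algebra.linearMap S T) hφ
  have : Module.Finite S N := Module.Finite.trans T N
  exact h N

end IFP

namespace IFP
universe u

lemma GFree.aux {R S : Type u} [CommRing R] [IsDomain R] [CommRing S] [IsNoetherianRing S]
    [Algebra R S] (h : GFree R S)
    {N : Type u} [AddCommGroup N] [Module R N] [Module S N] [IsScalarTower R S N]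
    (T : N →ₗ[S] N) (N0 : Submodule S N) (hN0 : N0.FG)
    (hU : ∀ x, ∃ i, x ∈ (Finset.range i).sup (fun j => N0.map (T ^ j))) :
    ∃ f : R, f ≠ 0 ∧ AFlat R f N := by
  let Q : ℕ → Submodule S N := fun i => (Finset.range i).sup (fun j => N0.map (T ^ j))
  have hQmono : Monotone Q := fun a b hab => Finset.sup_mono (Finset.range_mono hab)
  have hQsucc : ∀ i, Q (i + 1) = N0.map (T ^ i) ⊔ Q i := fun i => by
    simp only [Q, Finset.range_add_one, Finset.sup_insert]
  have hTQ : ∀ i, Q i ≤ (Q (i + 1)).comap T := fun i => by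
    refine Finset.sup_le fun j hj => ?_
    rintro _ ⟨x, hx, rfl⟩
    have : N0.map (T ^ (j + 1)) ≤ Q (i + 1) :=
      Finset.le_sup (f := fun j => N0.map (T ^ j)) (by simpa using hj)
    refine this ⟨x, hx, ?_⟩
    rw [pow_succ', Module.End.mul_apply]
  let K : ℕ →o Submodule S N0 :=
    ⟨fun i => (Q i).comap ((T ^ i) ∘ₗ N0.subtype), monotone_nat_of_le_succ fun i x hx => by
      simp only [Submodule.mem_comap, LinearMap.comp_apply, pow_succ', Module.End.mul_apply] at hx ⊢
      exact hTQ i hx⟩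
  have : Module.Finite S N0 := Module.Finite.iff_fg.2 hN0
  obtain ⟨c, hc⟩ := monotone_stabilizes_iff_noetherian.2 (inferInstance : IsNoetherian S N0) K
  choose F hF0 hF using fun P : Submodule S N0 => h (N0 ⧸ P)
  let f := ∏ i ∈ Finset.range (c + 1), F (K i)
  have hdvd : ∀ i, F (K i) ∣ f := fun i => by
    rcases le_total i c with hi | hi
    · exact Finset.dvd_prod_of_mem (fun i => F (K i)) (by simp; omega)
    · rw [← hc i hi]
      exact Finset.dvd_prod_of_mem (fun i => F (K i)) (by simp)
  refine ⟨f, Finset.prod_ne_zero_iff.2 fun i _ => hF0 _, ?_⟩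
  refine AFlat.of_union (fun i => (Q i).restrictScalars R) (fun a b hab => hQmono hab) hU ?_
  intro i
  change AFlat R f (Q i)
  induction i with
  | zero =>
    refine AFlat.of_torsion fun x => ?_
    have hx := x.2
    simp only [Q, Finset.range_zero, Finset.sup_empty, Submodule.mem_bot] at hx
    have hx0 : x = 0 := Subtype.ext hx
    rw [hx0, smul_zero]
  | succ i ih =>
    have hle : Q i ≤ Q (i + 1) := hQmono (Nat.le_succ i)
    let D : Submodule S (Q (i + 1)) := (Q i).comap (Q (i + 1)).subtype
    have hmem : ∀ n : N0, (T ^ i) n ∈ Q (i + 1) := fun n => by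
      rw [hQsucc]
      exact Submodule.mem_sup_left ⟨n, n.2, rfl⟩
    let ψ : N0 →ₗ[S] (Q (i + 1) ⧸ D) :=
      D.mkQ ∘ₗ LinearMap.codRestrict (Q (i + 1)) ((T ^ i) ∘ₗ N0.subtype) hmem
    have hψ : Function.Surjective ψ := by
      intro y
      obtain ⟨⟨y, hy⟩, rfl⟩ := D.mkQ_surjective y
      have hy' := hy
      rw [hQsucc] at hy'
      obtain ⟨_, ⟨n, hn, rfl⟩, b, hb, hab⟩ := Submodule.mem_sup.1 hy'
      refine ⟨⟨n, hn⟩, ?_⟩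
      simp only [ψ, LinearMap.comp_apply, Submodule.mkQ_apply]
      rw [Submodule.Quotient.eq]
      change (T ^ i) n - y ∈ Q i
      rw [← hab]
      simpa using hb
    have hker : LinearMap.ker ψ = K i := by
      ext x
      simp only [ψ, LinearMap.mem_ker, LinearMap.comp_apply, Submodule.mkQ_apply,
        Submodule.Quotient.mk_eq_zero]
      rfl
    have h3 : AFlat R f (Q (i + 1) ⧸ D) := by
      refine AFlat.of_equiv (N := N0 ⧸ K i) ?_ ((hF _).of_dvd (hdvd i))
      exact (((Submodule.quotEquivOfEq _ _ hker.symm).trans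
        (ψ.quotKerEquivOfSurjective hψ)).restrictScalars R)
    refine AFlat.extension (i := (Submodule.inclusion hle).restrictScalars R)
      (p := D.mkQ.restrictScalars R) (Submodule.inclusion_injective hle) D.mkQ_surjective ?_ ih h3
    intro y
    simp only [LinearMap.coe_restrictScalars, Submodule.mkQ_apply, Submodule.Quotient.mk_eq_zero]
    constructor
    · intro hy
      exact ⟨⟨y.1, hy⟩, rfl⟩
    · rintro ⟨x, rfl⟩
      exact x.2

lemma GFree.polynomial {R S : Type u} [CommRing R] [IsDomain R] [CommRing S] [IsNoetherianRing S]
    [Algebra R S] (h : GFree R S) : GFree R (Polynomial S) := by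
  intro N _ _ _ _ hfin
  let _ : Module S N := Module.compHom N (Polynomial.C : S →+* Polynomial S)
  have : IsScalarTower S (Polynomial S) N := ⟨fun s p x => by
    change (s • p) • x = Polynomial.C s • (p • x)
    rw [Polynomial.smul_eq_C_mul, mul_smul]⟩
  have : IsScalarTower R S N := ⟨fun r s x => by
    change Polynomial.C (r • s) • x = r • (Polynomial.C s • x)
    rw [← smul_assoc, Polynomial.smul_C]⟩
  obtain ⟨s, hs⟩ := hfin
  let T : N →ₗ[S] N := Algebra.lsmul S S N (Polynomial.X : Polynomial S)
  have hT : ∀ j x, (T ^ j) x = (Polynomial.X ^ j : Polynomial S) • x := by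
    intro j x
    simp only [T, ← map_pow]
    rfl
  refine GFree.aux h T (Submodule.span S s) ⟨s, rfl⟩ ?_
  intro x
  have hx : x ∈ Submodule.span (Polynomial S) (s : Set N) := hs ▸ Submodule.mem_top
  have hmono : Monotone fun i => (Finset.range i).sup
    (fun j => (Submodule.span S (s : Set N)).map (T ^ j)) :=
    fun a b hab => Finset.sup_mono (Finset.range_mono hab)
  induction hx using Submodule.span_induction with
  | mem x hx =>
    refine ⟨1, ?_⟩
    simp only [Finset.range_one, Finset.sup_singleton]
    exact ⟨x, Submodule.subset_span hx, by simp⟩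
  | zero => exact ⟨0, Submodule.zero_mem _⟩
  | add x y _ _ hx hy =>
    obtain ⟨i, hi⟩ := hx
    obtain ⟨j, hj⟩ := hy
    exact ⟨max i j, Submodule.add_mem _ (hmono (le_max_left _ _) hi) (hmono (le_max_right _ _) hj)⟩
  | smul p x _ hx =>
    obtain ⟨i, hi⟩ := hx
    induction p using Polynomial.induction_on' with
    | add p q hp hq =>
      obtain ⟨a, ha⟩ := hp
      obtain ⟨b, hb⟩ := hq
      refine ⟨max a b, ?_⟩
      rw [add_smul]
      exact Submodule.add_mem _ (hmono (le_max_left _ _) ha) (hmono (le_max_right _ _) hb)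
    | monomial n a =>
      refine ⟨i + n, ?_⟩
      rw [← Polynomial.C_mul_X_pow_eq_monomial, mul_smul]
      refine Submodule.smul_mem _ a ?_
      rw [← hT]
      have : (Finset.range i).sup (fun j => (Submodule.span S (s : Set N)).map (T ^ j)) ≤
        ((Finset.range (i + n)).sup
          (fun j => (Submodule.span S (s : Set N)).map (T ^ j))).comap (T ^ n) := by
        refine Finset.sup_le fun j hj => ?_
        rintro _ ⟨y, hy, rfl⟩
        have hle : (Submodule.span S (s : Set N)).map (T ^ (n + j)) ≤ (Finset.range (i + n)).sup
          (fun j => (Submodule.span S (s : Set N)).map (T ^ j)) :=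
          Finset.le_sup (f := fun j => (Submodule.span S (s : Set N)).map (T ^ j))
            (by simp at hj ⊢; omega)
        refine hle ⟨y, hy, ?_⟩
        rw [pow_add, Module.End.mul_apply]
      exact this hi

lemma GFree.mvPolynomial (R : Type u) [CommRing R] [IsDomain R] [IsNoetherianRing R] (n : ℕ) :
    GFree R (MvPolynomial (Fin n) R) := by
  induction n with
  | zero =>
    exact GFree.of_surjective (MvPolynomial.isEmptyAlgEquiv R (Fin 0)).symm.toAlgHom
      (MvPolynomial.isEmptyAlgEquiv R (Fin 0)).symm.surjective (GFree.self R)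
  | succ n ih =>
    exact GFree.of_surjective (MvPolynomial.finSuccEquiv R n).symm.toAlgHom
      (MvPolynomial.finSuccEquiv R n).symm.surjective ih.polynomial

lemma GFree.of_finiteType (R S : Type u) [CommRing R] [IsDomain R] [IsNoetherianRing R]
    [CommRing S] [Algebra R S] [Algebra.FiniteType R S] : GFree R S := by
  obtain ⟨n, φ, hφ⟩ := Algebra.FiniteType.iff_quotient_mvPolynomial''.1
    (inferInstance : Algebra.FiniteType R S)
  exact GFree.of_surjective φ hφ (GFree.mvPolynomial R n)

/-- Relative version. -/
def RFlat (R : Type u) [CommRing R] (I : Ideal R) (f : R) (N : Type u) [AddCommGroup N]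
    [Module R N] : Prop :=
  ∀ (X Y : Type u) [AddCommGroup X] [AddCommGroup Y] [Module R X] [Module R Y] (g : X →ₗ[R] Y),
    (∀ a ∈ I, ∀ y : Y, a • y = 0) →
    Function.Injective g → ∀ z : N ⊗[R] X, g.lTensor N z = 0 → ∃ n : ℕ, f ^ n • z = 0

lemma exists_RFlat (R S : Type u) [CommRing R] [IsNoetherianRing R] [CommRing S] [Algebra R S]
    [Algebra.FiniteType R S] (p : Ideal R) [p.IsPrime] : ∃ f : R, f ∉ p ∧ RFlat R p f S := by
  have : IsDomain (R ⧸ p) := inferInstance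
  obtain ⟨f, hf, h⟩ := GFree.of_finiteType (R ⧸ p) ((R ⧸ p) ⊗[R] S) ((R ⧸ p) ⊗[R] S)
  obtain ⟨f, rfl⟩ := Ideal.Quotient.mk_surjective f
  refine ⟨f, fun h => hf (Ideal.Quotient.eq_zero_iff_mem.2 h), ?_⟩
  intro X Y _ _ _ _ g hY hg z hz
  have hX : ∀ a ∈ p, ∀ x : X, a • x = 0 := fun a ha x => hg (by rw [map_smul, hY a ha, map_zero])
  let _ : Module (R ⧸ p) X := Module.IsTorsionBySet.module (I := p) (fun x a => hX a a.2 x)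
  let _ : Module (R ⧸ p) Y := Module.IsTorsionBySet.module (I := p) (fun x a => hY a a.2 x)
  have : IsScalarTower R (R ⧸ p) X := Module.IsTorsionBySet.isScalarTower _
  have : IsScalarTower R (R ⧸ p) Y := Module.IsTorsionBySet.isScalarTower _
  let g' : X →ₗ[R ⧸ p] Y := { g with
    map_smul' := fun r x => by
      obtain ⟨r, rfl⟩ := Ideal.Quotient.mk_surjective r
      exact g.map_smul r x }
  let eX : X ⊗[R ⧸ p] ((R ⧸ p) ⊗[R] S) ≃ₗ[R] X ⊗[R] S :=
    (TensorProduct.AlgebraTensorModule.cancelBaseChange R (R ⧸ p) (R ⧸ p) X S).restrictScalars R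
  let eY : Y ⊗[R ⧸ p] ((R ⧸ p) ⊗[R] S) ≃ₗ[R] Y ⊗[R] S :=
    (TensorProduct.AlgebraTensorModule.cancelBaseChange R (R ⧸ p) (R ⧸ p) Y S).restrictScalars R
  let cX := ((TensorProduct.comm (R ⧸ p) ((R ⧸ p) ⊗[R] S) X).restrictScalars R).trans
    (eX.trans (TensorProduct.comm R X S))
  let cY := ((TensorProduct.comm (R ⧸ p) ((R ⧸ p) ⊗[R] S) Y).restrictScalars R).trans
    (eY.trans (TensorProduct.comm R Y S))
  have key : ∀ w, cY (g'.lTensor _ w) = g.lTensor S (cX w) := by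
    intro w
    induction w using TensorProduct.induction_on with
    | zero => simp
    | add x y hx hy => simp only [map_add, hx, hy]
    | tmul a x =>
      induction a using TensorProduct.induction_on with
      | zero => simp
      | add x y hx hy => simp only [map_add, TensorProduct.add_tmul, hx, hy]
      | tmul r s =>
        simp [cX, cY, eX, eY]
        exact congrArg _ (g'.map_smul r x).symm
  obtain ⟨w, rfl⟩ := cX.surjective z
  rw [← key, LinearEquiv.map_eq_zero_iff] at hz
  obtain ⟨n, hn⟩ := h X Y g' hg w hz
  refine ⟨n, ?_⟩
  rw [← map_smul, LinearEquiv.map_eq_zero_iff, ← hn, ← map_pow]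
  exact (algebraMap_smul (R ⧸ p) (f ^ n) w).symm

end IFP

namespace IFP
universe u

section
variable {R S : Type u} [CommRing R] [AddCommGroup S] [Module R S]

lemma lift_correct {X Y F' F G : Type u} [AddCommGroup X] [Module R X] [AddCommGroup Y] [Module R Y]
    [AddCommGroup F'] [Module R F'] [AddCommGroup F] [Module R F] [AddCommGroup G] [Module R G]
    (g : X →ₗ[R] Y) (g' : F' →ₗ[R] F) (π' : F' →ₗ[R] X) (π : F →ₗ[R] Y) (j : G →ₗ[R] F')
    (hπ' : Function.Surjective π') (hπ : Function.Surjective π) (hsq : g ∘ₗ π' = π ∘ₗ g')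
    (hj : π' ∘ₗ j = 0) (hex : Function.Exact (g' ∘ₗ j) π)
    (z : S ⊗[R] X) (hz : g.lTensor S z = 0) :
    ∃ w : S ⊗[R] F', π'.lTensor S w = z ∧ g'.lTensor S w = 0 := by
  obtain ⟨w, rfl⟩ := LinearMap.lTensor_surjective S hπ' z
  rw [← LinearMap.comp_apply, ← LinearMap.lTensor_comp, hsq, LinearMap.lTensor_comp,
    LinearMap.comp_apply] at hz
  obtain ⟨v, hv⟩ := (lTensor_exact S hex hπ _).1 hz
  refine ⟨w - j.lTensor S v, ?_, ?_⟩
  · rw [map_sub, ← LinearMap.comp_apply, ← LinearMap.lTensor_comp, hj]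
    simp
  · rw [map_sub, ← LinearMap.comp_apply (g'.lTensor S) (j.lTensor S), ← LinearMap.lTensor_comp, hv,
      sub_self]

lemma rflat_step {I : Ideal R} {f : R} (h : RFlat R I f S) {X Y P : Type u}
    [AddCommGroup X] [Module R X] [AddCommGroup Y] [Module R Y] [AddCommGroup P] [Module R P]
    (g : X →ₗ[R] Y) (p : P →ₗ[R] X)
    (hp : LinearMap.range p = (I • (⊤ : Submodule R Y)).comap g)
    (z : S ⊗[R] X) (hz : g.lTensor S z = 0) : ∃ (n : ℕ) (w : S ⊗[R] P),
      f ^ n • z = p.lTensor S w := by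
  let gb : (X ⧸ LinearMap.range p) →ₗ[R] (Y ⧸ (I • (⊤ : Submodule R Y))) :=
    Submodule.mapQ _ _ g hp.le
  have hgb : Function.Injective gb := by
    rw [← LinearMap.ker_eq_bot, eq_bot_iff]
    intro x hx
    obtain ⟨x, rfl⟩ := Submodule.mkQ_surjective _ x
    rw [LinearMap.mem_ker] at hx
    simp only [gb, Submodule.mkQ_apply, Submodule.mapQ_apply, Submodule.Quotient.mk_eq_zero] at hx
    simp only [Submodule.mkQ_apply, Submodule.mem_bot, Submodule.Quotient.mk_eq_zero]
    rw [hp]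
    exact hx
  have hcomp : gb ∘ₗ (LinearMap.range p).mkQ = (I • (⊤ : Submodule R Y)).mkQ ∘ₗ g := by
    ext x; rfl
  obtain ⟨n, hn⟩ := h _ _ gb (by
    intro a ha y
    obtain ⟨y, rfl⟩ := Submodule.mkQ_surjective _ y
    rw [← map_smul]
    simp only [Submodule.mkQ_apply, Submodule.Quotient.mk_eq_zero]
    exact Submodule.smul_mem_smul ha trivial) hgb ((LinearMap.range p).mkQ.lTensor S z) (by
      rw [← LinearMap.comp_apply, ← LinearMap.lTensor_comp, hcomp, LinearMap.lTensor_comp,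
        LinearMap.comp_apply, hz, map_zero])
  rw [← map_smul] at hn
  obtain ⟨w, hw⟩ := (lTensor_exact S (LinearMap.exact_map_mkQ_range p)
    (Submodule.mkQ_surjective _) _).1 hn
  exact ⟨n, w, hw.symm⟩

lemma finsupp_kill {ι : Type u} {L N X : Type u} [AddCommGroup L] [Module R L] [AddCommGroup N]
    [Module R N] [AddCommGroup X] [Module R X]
    (k : L →ₗ[R] N) (φ : (ι →₀ L) →ₗ[R] X)
    (hφ : ∀ i, ∀ w : S ⊗[R] L, k.lTensor S w = 0 →
      (φ ∘ₗ Finsupp.lsingle i).lTensor S w = 0)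
    (y : S ⊗[R] (ι →₀ L)) (hy : (Finsupp.mapRange.linearMap k).lTensor S y = 0) :
    φ.lTensor S y = 0 := by
  classical
  let e := TensorProduct.finsuppRight R R S L ι
  have h1 : ∀ i, k.lTensor S (e y i) = 0 := by
    intro i
    have : e y i = (Finsupp.lapply (R := R) i).lTensor S y := by
      rw [TensorProduct.finsuppRight_apply]
    rw [this, ← LinearMap.comp_apply, ← LinearMap.lTensor_comp]
    have h2 : k ∘ₗ Finsupp.lapply (R := R) i =
      Finsupp.lapply i ∘ₗ (Finsupp.mapRange.linearMap k : (ι →₀ L) →ₗ[R] _) := by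
      refine LinearMap.ext fun v => ?_
      simp
    rw [h2, LinearMap.lTensor_comp, LinearMap.comp_apply, hy, map_zero]
  have h3 : ∀ v : ι →₀ S ⊗[R] L, φ.lTensor S (e.symm v) =
      v.sum fun i w => (φ ∘ₗ Finsupp.lsingle i).lTensor S w := by
    intro v
    induction v using Finsupp.induction_linear with
    | zero => simp
    | add a b ha hb =>
      rw [map_add, map_add, ha, hb, Finsupp.sum_add_index']
      · simp
      · simp
    | single i w =>
      rw [Finsupp.sum_single_index (by simp)]
      induction w using TensorProduct.induction_on with
      | zero => simp
      | add a b ha hb => rw [Finsupp.single_add, map_add, map_add, ha, hb, map_add]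
      | tmul s l => simp [e]
  rw [← e.symm_apply_apply y, h3]
  exact Finset.sum_eq_zero fun i _ => hφ i _ (h1 i)

end

/-- the `I`-adic relative flatness over `C`. -/
def QFlat (R S C : Type u) [CommRing R] [AddCommGroup S] [Module R S] [CommRing C] [Algebra R C]
    (I : Ideal R) (f : R) : Prop :=
  ∀ (X Y : Type u) [AddCommGroup X] [AddCommGroup Y] [Module R X] [Module R Y] [Module C X]
    [Module C Y] [IsScalarTower R C X] [IsScalarTower R C Y] (g : X →ₗ[C] Y),
    Function.Injective g → (∀ a ∈ I, ∀ y : Y, ∃ x, g x = a • y) →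
    ∀ z : S ⊗[R] X, (g.restrictScalars R).lTensor S z = 0 → ∃ n : ℕ, f ^ n • z = 0

/-- canonical map `I → IC`. -/
def iota {R : Type u} (C : Type u) [CommRing R] [CommRing C] [Algebra R C] (I : Ideal R) :
    I →ₗ[R] (I.map (algebraMap R C)) :=
  LinearMap.codRestrict ((I.map (algebraMap R C)).restrictScalars R)
    (Algebra.linearMap R C ∘ₗ I.subtype) (fun x => Ideal.mem_map_of_mem _ x.2)

lemma qflat_core {R S : Type u} [CommRing R] [AddCommGroup S] [Module R S]
    {I : Ideal R} {f : R} (h : RFlat R I f S)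
    {X Y F P : Type u} [AddCommGroup X] [AddCommGroup Y] [Module R X] [Module R Y]
    [AddCommGroup F] [AddCommGroup P] [Module R F] [Module R P] (g : X →ₗ[R] Y)
    (hg : Function.Injective g) (π : F →ₗ[R] Y) (hπ : Function.Surjective π) (q : P →ₗ[R] F)
    (hq : LinearMap.range q = I • ⊤) (φ : P →ₗ[R] X) (hφ : ∀ v, g (φ v) = π (q v))
    (hkill : ∀ v, q.lTensor S v = 0 → φ.lTensor S v = 0)
    (z : S ⊗[R] X) (hz : g.lTensor S z = 0) : ∃ n : ℕ, f ^ n • z = 0 := by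
  let F' : Submodule R F := (LinearMap.range g).comap π
  let ge := LinearEquiv.ofInjective g hg
  have hge : ∀ x : LinearMap.range g, g (ge.symm x) = x := fun x =>
    congrArg Subtype.val (ge.apply_symm_apply x)
  let π' : F' →ₗ[R] X := ge.symm.toLinearMap ∘ₗ
    LinearMap.codRestrict (LinearMap.range g) (π ∘ₗ F'.subtype) (fun x => x.2)
  have hsq : g ∘ₗ π' = π ∘ₗ F'.subtype := by
    ext x
    exact hge _
  have hsq' : ∀ x : F', g (π' x) = π x := fun x => LinearMap.congr_fun hsq x
  have hπ' : Function.Surjective π' := by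
    intro x
    obtain ⟨v, hv⟩ := hπ (g x)
    refine ⟨⟨v, ⟨x, hv.symm⟩⟩, hg ?_⟩
    rw [hsq', hv]
  have hGle : LinearMap.ker π ≤ F' := fun v hv => ⟨0, by
    rw [LinearMap.mem_ker] at hv
    rw [map_zero, hv]⟩
  let j : LinearMap.ker π →ₗ[R] F' := Submodule.inclusion hGle
  have hj : π' ∘ₗ j = 0 := by
    refine LinearMap.ext fun x => ?_
    apply hg
    change g (π' _) = g 0
    rw [hsq', map_zero]
    exact x.2
  have hex : Function.Exact (F'.subtype ∘ₗ j) π := by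
    intro v
    constructor
    · intro hv
      exact ⟨⟨v, hv⟩, rfl⟩
    · rintro ⟨v, rfl⟩
      exact v.2
  obtain ⟨w, rfl, hw⟩ := lift_correct g F'.subtype π' π j hπ' hπ hsq hj hex z hz
  have hqF : ∀ v, q v ∈ F' := fun v => ⟨φ v, hφ v⟩
  let p : P →ₗ[R] F' := LinearMap.codRestrict F' q hqF
  have hqp : q = F'.subtype ∘ₗ p := rfl
  have hpr : LinearMap.range p = (I • (⊤ : Submodule R F)).comap F'.subtype := by
    rw [← hq]
    ext v
    constructor
    · rintro ⟨u, rfl⟩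
      exact ⟨u, rfl⟩
    · rintro ⟨u, hu⟩
      exact ⟨u, Subtype.ext hu⟩
  obtain ⟨n, v, hv⟩ := rflat_step h F'.subtype p hpr w hw
  refine ⟨n, ?_⟩
  have hpφ : π' ∘ₗ p = φ := by
    refine LinearMap.ext fun x => ?_
    apply hg
    change g (π' _) = _
    rw [hsq', hφ]
    rfl
  rw [← map_smul, hv, ← LinearMap.comp_apply, ← LinearMap.lTensor_comp, hpφ]
  apply hkill
  rw [hqp, LinearMap.lTensor_comp, LinearMap.comp_apply, ← hv, map_smul, hw, smul_zero]

lemma range_mapRange_ideal {R Y : Type u} [CommRing R] (I : Ideal R) :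
    LinearMap.range (Finsupp.mapRange.linearMap I.subtype : (Y →₀ I) →ₗ[R] (Y →₀ R)) = I • ⊤ := by
  apply le_antisymm
  · rintro _ ⟨v, rfl⟩
    induction v using Finsupp.induction_linear with
    | zero => rw [map_zero]; exact zero_mem _
    | add a b ha hb => rw [map_add]; exact add_mem ha hb
    | single y a =>
      have : (Finsupp.mapRange.linearMap I.subtype : (Y →₀ I) →ₗ[R] (Y →₀ R))
        (Finsupp.single y a) = (a : R) • Finsupp.single y 1 := by simp
      rw [this]
      exact Submodule.smul_mem_smul a.2 trivial
  · intro v hv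
    refine Submodule.smul_induction_on hv ?_ fun _ _ h1 h2 => add_mem h1 h2
    intro a ha u _
    refine ⟨Finsupp.mapRange (fun r => (⟨a * r, I.mul_mem_right r ha⟩ : I)) (by simp) u, ?_⟩
    ext y
    simp

lemma qflat_of_kill {R S C : Type u} [CommRing R] [AddCommGroup S] [Module R S] [CommRing C]
    [Algebra R C] {I : Ideal R} {f : R} (h : RFlat R I f S)
    (hK : ∀ k : S ⊗[R] I, I.subtype.lTensor S k = 0 → (iota C I).lTensor S k = 0) :
    QFlat R S C I f := by
  intro X Y _ _ _ _ _ _ _ _ g hg hI z hz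
  let IC := I.map (algebraMap R C)
  let ge := LinearEquiv.ofInjective (g.restrictScalars R) hg
  have hge : ∀ x : LinearMap.range (g.restrictScalars R), g (ge.symm x) = x := fun x =>
    congrArg Subtype.val (ge.apply_symm_apply x)
  have hIC : ∀ y, ∀ c ∈ IC, ∃ x, g x = c • y := by
    intro y c hc
    refine Submodule.span_induction ?_ ⟨0, by simp⟩ ?_ ?_ hc
    · rintro _ ⟨a, ha, rfl⟩
      obtain ⟨x, hx⟩ := hI a ha y
      exact ⟨x, by rw [hx, algebraMap_smul]⟩
    · rintro a b _ _ ⟨x, hx⟩ ⟨x', hx'⟩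
      exact ⟨x + x', by rw [map_add, add_smul, hx, hx']⟩
    · rintro a b _ ⟨x, hx⟩
      exact ⟨a • x, by rw [map_smul, hx, smul_eq_mul, mul_smul]⟩
  let ψ : Y → (IC →ₗ[R] X) := fun y => ge.symm.toLinearMap ∘ₗ
    LinearMap.codRestrict (LinearMap.range (g.restrictScalars R))
      (((LinearMap.toSpanSingleton C Y y).restrictScalars R) ∘ₗ
        (IC.subtype.restrictScalars R)) (fun x => hIC y x x.2)
  have hψ : ∀ y (c : IC), g (ψ y c) = (c : C) • y := fun y c => hge _
  let φ : (Y →₀ I) →ₗ[R] X := Finsupp.lsum R fun y => ψ y ∘ₗ iota C I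
  refine qflat_core h (g.restrictScalars R) hg (Finsupp.linearCombination R id)
    (Finsupp.linearCombination_id_surjective R Y) _ (range_mapRange_ideal I) φ ?_
    (finsupp_kill I.subtype φ ?_) z hz
  · intro v
    induction v using Finsupp.induction_linear with
    | zero => simp
    | add a b ha hb => rw [map_add, map_add, ha, hb, map_add, map_add]
    | single y a =>
      have : φ (Finsupp.single y a) = ψ y (iota C I a) := by simp [φ]
      rw [this]
      change g (ψ y (iota C I a)) = _
      rw [hψ]
      change (algebraMap R C a) • y = _
      rw [algebraMap_smul]
      simp
  · intro y k hk
    have : φ ∘ₗ Finsupp.lsingle y = ψ y ∘ₗ iota C I := by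
      ext a
      simp [φ]
    rw [this, LinearMap.lTensor_comp, LinearMap.comp_apply, hK k hk, map_zero]

end IFP

namespace IFP
universe u

/-- relative flatness along `I`. -/
def QT (C T : Type u) [CommRing C] [AddCommGroup T] [Module C T] (I : Ideal C) (f : C) : Prop :=
  ∀ (X Y : Type u) [AddCommGroup X] [AddCommGroup Y] [Module C X] [Module C Y] (g : X →ₗ[C] Y),
    Function.Injective g → (∀ a ∈ I, ∀ y : Y, ∃ x, g x = a • y) →
    ∀ z : T ⊗[C] X, g.lTensor T z = 0 → ∃ n : ℕ, f ^ n • z = 0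

lemma QT.pow {C T : Type u} [CommRing C] [AddCommGroup T] [Module C T] {I : Ideal C} {f : C}
    (h : QT C T I f) (n : ℕ) : QT C T (I ^ n) f := by
  induction n with
  | zero =>
    intro X Y _ _ _ _ g hg hI z hz
    refine ⟨0, ?_⟩
    have hs : Function.Surjective g := fun y => by
      obtain ⟨x, hx⟩ := hI 1 (by simp) y
      exact ⟨x, by rw [hx, one_smul]⟩
    let e := LinearEquiv.ofBijective g ⟨hg, hs⟩
    have : e.lTensor T z = 0 := hz
    rw [LinearEquiv.map_eq_zero_iff] at this
    rw [this, smul_zero]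
  | succ n ih =>
    intro X Y _ _ _ _ g hg hI z hz
    let Z : Submodule C Y := LinearMap.range g ⊔ I ^ n • ⊤
    let g1 : X →ₗ[C] Z := LinearMap.codRestrict Z g
      (fun x => Submodule.mem_sup_left (LinearMap.mem_range_self g x))
    have hg1 : Function.Injective g1 := fun a b hab => hg (congrArg Subtype.val hab)
    obtain ⟨m, hm⟩ := ih Z Y Z.subtype Subtype.val_injective (by
      intro a ha y
      exact ⟨⟨a • y, Submodule.mem_sup_right (Submodule.smul_mem_smul ha trivial)⟩, rfl⟩)
      (g1.lTensor T z) (by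
        rw [← LinearMap.comp_apply, ← LinearMap.lTensor_comp]
        exact hz)
    rw [← map_smul] at hm
    obtain ⟨k, hk⟩ := h X Z g1 hg1 (by
      rintro a ha ⟨y, hy⟩
      have : a • y ∈ LinearMap.range g := by
        obtain ⟨u, ⟨x, rfl⟩, v, hv, rfl⟩ := Submodule.mem_sup.1 hy
        rw [smul_add]
        refine add_mem ⟨a • x, map_smul _ _ _⟩ ?_
        clear hy
        refine Submodule.smul_induction_on hv ?_ ?_
        · intro b hb y _
          obtain ⟨x, hx⟩ := hI (a * b) (by rw [pow_succ']; exact Ideal.mul_mem_mul ha hb) y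
          exact ⟨x, by rw [hx, mul_smul]⟩
        · intro b c hb hc
          rw [smul_add]
          exact add_mem hb hc
      obtain ⟨x, hx⟩ := this
      exact ⟨x, Subtype.ext hx⟩) _ hm
    exact ⟨k + m, by rw [pow_add, mul_smul, hk]⟩

lemma nak {T W : Type u} [CommRing T] [IsNoetherianRing T] [AddCommGroup W] [Module T W]
    [Module.Finite T W] (P : Ideal T) (Z : Submodule T W) (t : T)
    (h : ∀ z ∈ Z, ∀ n : ℕ, ∃ m : ℕ, t ^ m • z ∈ P ^ n • (⊤ : Submodule T W))
    (q : Ideal T) [q.IsPrime] (hP : P ≤ q) (ht : t ∉ q) (z : W) (hz : z ∈ Z) :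
    ∃ s : T, s ∉ q ∧ s • z = 0 := by
  obtain ⟨k, hk⟩ := Ideal.exists_pow_inf_eq_pow_smul P Z
  have h1 : ∀ z ∈ Z, ∃ m : ℕ, t ^ m • z ∈ P • Z := by
    intro z hz
    obtain ⟨m, hm⟩ := h z hz (k + 1)
    refine ⟨m, ?_⟩
    have := hk (k + 1) (by omega)
    have h2 : t ^ m • z ∈ P ^ (k + 1) • (⊤ : Submodule T W) ⊓ Z := ⟨hm, Z.smul_mem _ hz⟩
    rw [this, Nat.add_sub_cancel_left, pow_one] at h2
    exact Submodule.smul_mono le_rfl inf_le_right h2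
  have hfg : Z.FG := IsNoetherian.noetherian Z
  have h2 : ∃ m : ℕ, ∀ z ∈ Z, t ^ m • z ∈ P • Z := by
    obtain ⟨s, hs⟩ := hfg
    have hsZ : ∀ x ∈ s, x ∈ Z := fun x hx => hs ▸ Submodule.subset_span hx
    classical
    choose! m hm using h1
    refine ⟨s.sum m, fun z hz => ?_⟩
    rw [← hs] at hz
    induction hz using Submodule.span_induction with
    | mem x hx =>
      rw [← Finset.sum_erase_add s m hx, pow_add, mul_smul]
      exact Submodule.smul_mem _ _ (hm x (hsZ x hx))
    | zero => rw [smul_zero]; exact zero_mem _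
    | add a b _ _ ha hb => rw [smul_add]; exact add_mem ha hb
    | smul a b _ hb => rw [smul_comm]; exact Submodule.smul_mem _ _ hb
  obtain ⟨m, hm⟩ := h2
  obtain ⟨p, hp, -, hc, h0⟩ :=
    LinearMap.exists_monic_and_natDegree_eq_and_coeff_mem_pow_and_aeval_eq_zero T
      (algebraMap T (Module.End T Z) (t ^ m)) P (by
        rintro _ ⟨x, rfl⟩
        rw [Submodule.mem_smul_top_iff]
        exact hm x x.2)
  rw [Polynomial.aeval_algebraMap_apply] at h0
  have h3 := congrArg Subtype.val (LinearMap.congr_fun h0 ⟨z, hz⟩)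
  refine ⟨Polynomial.aeval (t ^ m) p, fun hq => ht ?_, h3⟩
  rw [Polynomial.aeval_eq_sum_range, Finset.sum_range_succ, hp.coeff_natDegree, one_smul] at hq
  have h4 : ∑ x ∈ Finset.range p.natDegree, p.coeff x • (t ^ m) ^ x ∈ q := by
    refine Ideal.sum_mem _ fun i hi => ?_
    rw [smul_eq_mul]
    refine q.mul_mem_right _ (hP (Ideal.pow_le_self ?_ (hc i)))
    have := Finset.mem_range.1 hi
    omega
  have h5 := (Ideal.add_mem_iff_right _ h4).1 hq
  rw [← pow_mul] at h5
  exact Ideal.IsPrime.mem_of_pow_mem inferInstance _ h5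

lemma QT.adic {C T : Type u} [CommRing C] [IsNoetherianRing C] [CommRing T] [Algebra C T]
    {I : Ideal C} {f : C} (h : QT C T I f) (J : Ideal C) (z : T ⊗[C] J)
    (hz : J.subtype.lTensor T z = 0) (n : ℕ) :
    ∃ m : ℕ, (algebraMap C T f) ^ m • z ∈
      (I.map (algebraMap C T)) ^ n • (⊤ : Submodule T (T ⊗[C] J)) := by
  obtain ⟨k, hk⟩ := Ideal.exists_pow_inf_eq_pow_smul I (J : Submodule C C)
  let L : Submodule C C := I ^ (n + k) • ⊤
  let X0 : Submodule C J := L.comap J.subtype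
  let g : (J ⧸ X0) →ₗ[C] (C ⧸ L) := Submodule.mapQ _ _ J.subtype le_rfl
  have hg : Function.Injective g := by
    rw [← LinearMap.ker_eq_bot, eq_bot_iff]
    intro x hx
    obtain ⟨x, rfl⟩ := Submodule.mkQ_surjective _ x
    rw [LinearMap.mem_ker] at hx
    simp only [g, Submodule.mkQ_apply, Submodule.mapQ_apply, Submodule.Quotient.mk_eq_zero] at hx
    simp only [Submodule.mkQ_apply, Submodule.mem_bot, Submodule.Quotient.mk_eq_zero]
    exact hx
  have hcomp : g ∘ₗ X0.mkQ = L.mkQ ∘ₗ J.subtype := by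
    ext x; rfl
  obtain ⟨m, hm⟩ := h.pow (n + k) _ _ g hg (by
    intro a ha y
    refine ⟨0, ?_⟩
    obtain ⟨y, rfl⟩ := Submodule.mkQ_surjective _ y
    rw [← map_smul, map_zero]
    symm
    simp only [Submodule.mkQ_apply, Submodule.Quotient.mk_eq_zero]
    exact Submodule.smul_mem_smul ha trivial) (X0.mkQ.lTensor T z) (by
      rw [← LinearMap.comp_apply, ← LinearMap.lTensor_comp, hcomp, LinearMap.lTensor_comp,
        LinearMap.comp_apply, hz, map_zero])
  rw [← map_smul] at hm
  obtain ⟨w, hw⟩ := (lTensor_exact T (LinearMap.exact_subtype_mkQ X0)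
    (Submodule.mkQ_surjective _) _).1 hm
  refine ⟨m, ?_⟩
  rw [← map_pow, algebraMap_smul, ← hw]
  clear hw hm
  induction w using TensorProduct.induction_on with
  | zero => rw [map_zero]; exact zero_mem _
  | add a b ha hb => rw [map_add]; exact add_mem ha hb
  | tmul t x =>
    rw [LinearMap.lTensor_tmul]
    have hx : ((x : J) : C) ∈ I ^ (n + k) • (⊤ : Submodule C C) ⊓ J := ⟨x.2, x.1.2⟩
    rw [hk (n + k) (by omega), Nat.add_sub_cancel] at hx
    have hx' : (x : J) ∈ I ^ n • (⊤ : Submodule C J) := by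
      rw [Submodule.mem_smul_top_iff]
      exact Submodule.smul_mono le_rfl inf_le_right hx
    change t ⊗ₜ (x : J) ∈ _
    refine Submodule.smul_induction_on hx' ?_ ?_
    · intro a ha j _
      rw [← TensorProduct.smul_tmul, ← algebraMap_smul T a,
        ← TensorProduct.smul_tmul', ← Ideal.map_pow]
      exact Submodule.smul_mem_smul (Ideal.mem_map_of_mem _ ha) trivial
    · intro a b ha hb
      rw [TensorProduct.tmul_add]
      exact add_mem ha hb

lemma QT.local_crit {C T : Type u} [CommRing C] [IsNoetherianRing C] [CommRing T] [Algebra C T]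
    [IsNoetherianRing T] {I : Ideal C} {f : C} (h : QT C T I f) (J : Ideal C) (z : T ⊗[C] J)
    (hz : J.subtype.lTensor T z = 0) (q : Ideal T) [q.IsPrime] (hI : I.map (algebraMap C T) ≤ q)
    (hf : algebraMap C T f ∉ q) : ∃ s : T, s ∉ q ∧ s • z = 0 := by
  have : Module.Finite C J := inferInstance
  refine nak (I.map (algebraMap C T)) (LinearMap.ker (J.subtype.baseChange T)) (algebraMap C T f)
    ?_ q hI hf z hz
  intro z hz n
  exact h.adic J z hz n

lemma QFlat.qt {R S C : Type u} [CommRing R] [CommRing S] [Algebra R S] [CommRing C]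
    [Algebra R C] {I : Ideal R} {f : R} (h : QFlat R S C I f) :
    QT C (C ⊗[R] S) (I.map (algebraMap R C)) (algebraMap R C f) := by
  intro X Y _ _ _ _ g hg hI z hz
  let _ : Module R X := Module.compHom X (algebraMap R C)
  let _ : Module R Y := Module.compHom Y (algebraMap R C)
  have : IsScalarTower R C X := IsScalarTower.of_algebraMap_smul fun _ _ => rfl
  have : IsScalarTower R C Y := IsScalarTower.of_algebraMap_smul fun _ _ => rfl
  let eX : X ⊗[C] (C ⊗[R] S) ≃ₗ[R] X ⊗[R] S :=
    (TensorProduct.AlgebraTensorModule.cancelBaseChange R C C X S).restrictScalars R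
  let eY : Y ⊗[C] (C ⊗[R] S) ≃ₗ[R] Y ⊗[R] S :=
    (TensorProduct.AlgebraTensorModule.cancelBaseChange R C C Y S).restrictScalars R
  let cX := ((TensorProduct.comm C (C ⊗[R] S) X).restrictScalars R).trans
    (eX.trans (TensorProduct.comm R X S))
  let cY := ((TensorProduct.comm C (C ⊗[R] S) Y).restrictScalars R).trans
    (eY.trans (TensorProduct.comm R Y S))
  have key : ∀ w, cY (g.lTensor _ w) = (g.restrictScalars R).lTensor S (cX w) := by
    intro w
    induction w using TensorProduct.induction_on with
    | zero => simp
    | add x y hx hy => simp only [map_add, hx, hy]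
    | tmul a x =>
      induction a using TensorProduct.induction_on with
      | zero => simp
      | add x y hx hy => simp only [map_add, TensorProduct.add_tmul, hx, hy]
      | tmul r s =>
        simp [cX, cY, eX, eY]
  obtain ⟨n, hn⟩ := h X Y g hg (fun a ha y => by
    obtain ⟨x, hx⟩ := hI _ (Ideal.mem_map_of_mem _ ha) y
    exact ⟨x, by rw [hx, algebraMap_smul]⟩) (cX z) (by rw [← key, hz, map_zero])
  refine ⟨n, ?_⟩
  rw [← map_smul, LinearEquiv.map_eq_zero_iff] at hn
  rw [← map_pow, algebraMap_smul, hn]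

end IFP

namespace IFP
universe u

lemma flat_restrict {R S C : Type u} [CommRing R] [CommRing S] [Algebra R S] [CommRing C]
    [Algebra R C] [Module.Flat C (C ⊗[R] S)]
    (X Y : Type u) [AddCommGroup X] [AddCommGroup Y] [Module R X] [Module R Y] [Module C X]
    [Module C Y] [IsScalarTower R C X] [IsScalarTower R C Y] (g : X →ₗ[C] Y)
    (hg : Function.Injective g) : Function.Injective ((g.restrictScalars R).lTensor S) := by
  let eX : X ⊗[C] (C ⊗[R] S) ≃ₗ[R] X ⊗[R] S :=
    (TensorProduct.AlgebraTensorModule.cancelBaseChange R C C X S).restrictScalars R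
  let eY : Y ⊗[C] (C ⊗[R] S) ≃ₗ[R] Y ⊗[R] S :=
    (TensorProduct.AlgebraTensorModule.cancelBaseChange R C C Y S).restrictScalars R
  let cX := ((TensorProduct.comm C (C ⊗[R] S) X).restrictScalars R).trans
    (eX.trans (TensorProduct.comm R X S))
  let cY := ((TensorProduct.comm C (C ⊗[R] S) Y).restrictScalars R).trans
    (eY.trans (TensorProduct.comm R Y S))
  have key : ∀ w, cY (g.lTensor _ w) = (g.restrictScalars R).lTensor S (cX w) := by
    intro w
    induction w using TensorProduct.induction_on with
    | zero => simp
    | add x y hx hy => simp only [map_add, hx, hy]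
    | tmul a x =>
      induction a using TensorProduct.induction_on with
      | zero => simp
      | add x y hx hy => simp only [map_add, TensorProduct.add_tmul, hx, hy]
      | tmul r s =>
        simp [cX, cY, eX, eY]
  have hinj := Module.Flat.lTensor_preserves_injective_linearMap (M := C ⊗[R] S) g hg
  rw [injective_iff_map_eq_zero]
  intro z hz
  obtain ⟨w, rfl⟩ := cX.surjective z
  rw [← key, LinearEquiv.map_eq_zero_iff] at hz
  rw [(injective_iff_map_eq_zero _).1 hinj w hz, map_zero]

section
variable {R0 R S : Type u} [CommRing R0] [CommRing R] [Algebra R0 R] [CommRing S]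
  [Algebra R0 S]

lemma kill_R [Module.Flat R (R ⊗[R0] S)] (I : Ideal R0) (k : S ⊗[R0] I)
    (hk : I.subtype.lTensor S k = 0) : (iota R I).lTensor S k = 0 := by
  apply flat_restrict (R := R0) (S := S) (I.map (algebraMap R0 R)) R
    (I.map (algebraMap R0 R)).subtype Subtype.val_injective
  rw [map_zero, ← LinearMap.comp_apply, ← LinearMap.lTensor_comp]
  have : ((I.map (algebraMap R0 R)).subtype.restrictScalars R0) ∘ₗ iota R I =
    Algebra.linearMap R0 R ∘ₗ I.subtype := rfl
  rw [this, LinearMap.lTensor_comp, LinearMap.comp_apply, hk, map_zero]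

/-- image of `IC` in `R`. -/
lemma mem_stage (I : Ideal R0) (x : R) (hx : x ∈ I.map (algebraMap R0 R)) :
    ∃ C0 : Subalgebra R0 R, C0.FG ∧ ∀ C : Subalgebra R0 R, C0 ≤ C →
      ∃ y ∈ I.map (algebraMap R0 C), (y : R) = x := by
  induction hx using Submodule.span_induction with
  | mem x hx =>
    obtain ⟨a, ha, rfl⟩ := hx
    exact ⟨⊥, Subalgebra.fg_bot, fun C _ => ⟨_, Ideal.mem_map_of_mem _ ha, rfl⟩⟩
  | zero => exact ⟨⊥, Subalgebra.fg_bot, fun C _ => ⟨0, zero_mem _, rfl⟩⟩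
  | add a b _ _ ha hb =>
    obtain ⟨C1, h1, h1'⟩ := ha
    obtain ⟨C2, h2, h2'⟩ := hb
    refine ⟨C1 ⊔ C2, h1.sup h2, fun C hC => ?_⟩
    obtain ⟨y, hy, rfl⟩ := h1' C (le_sup_left.trans hC)
    obtain ⟨y', hy', rfl⟩ := h2' C (le_sup_right.trans hC)
    exact ⟨y + y', add_mem hy hy', rfl⟩
  | smul r a _ ha =>
    obtain ⟨C1, h1, h1'⟩ := ha
    refine ⟨C1 ⊔ Algebra.adjoin R0 {r}, h1.sup (by simpa using Subalgebra.fg_adjoin_finset (R := R0) {r}),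
      fun C hC => ?_⟩
    obtain ⟨y, hy, rfl⟩ := h1' C (le_sup_left.trans hC)
    have hr : r ∈ C := hC (Algebra.mem_sup_right (Algebra.subset_adjoin (by simp)))
    exact ⟨⟨r, hr⟩ * y, Ideal.mul_mem_left _ _ hy, rfl⟩

lemma mem_stage_fg (I : Ideal R0) (Q : Submodule R0 (I.map (algebraMap R0 R))) (hQ : Q.FG) :
    ∃ C0 : Subalgebra R0 R, C0.FG ∧ ∀ C : Subalgebra R0 R, C0 ≤ C →
      ∀ x ∈ Q, ∃ y ∈ I.map (algebraMap R0 C), (y : R) = x := by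
  classical
  obtain ⟨s, rfl⟩ := hQ
  choose C0 hC0 h using fun x : I.map (algebraMap R0 R) => mem_stage I (x : R) x.2
  refine ⟨s.sup C0, ?_, fun C hC x hx => ?_⟩
  · exact Finset.sup_induction Subalgebra.fg_bot (fun _ h1 _ h2 => h1.sup h2) (fun x _ => hC0 x)
  · induction hx using Submodule.span_induction with
    | mem x hx => exact h x C ((Finset.le_sup hx).trans hC)
    | zero => exact ⟨0, zero_mem _, rfl⟩
    | add a b _ _ ha hb =>
      obtain ⟨y, hy, h1⟩ := ha
      obtain ⟨y', hy', h2⟩ := hb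
      exact ⟨y + y', add_mem hy hy', by simp [h1, h2]⟩
    | smul r a _ ha =>
      obtain ⟨y, hy, h1⟩ := ha
      exact ⟨r • y, Submodule.smul_of_tower_mem _ r hy, by simp [h1]⟩

lemma fg_kill {L V : Type u} [AddCommGroup L] [Module R0 L] [Module.Finite R0 L]
    [AddCommGroup V] [Module R0 V] (φ : L →ₗ[R0] V) (k : S ⊗[R0] L)
    (hk : φ.lTensor S k = 0) :
    ∃ (Q : Submodule R0 V) (φ' : L →ₗ[R0] Q), Q.FG ∧ Q.subtype ∘ₗ φ' = φ ∧
      φ'.lTensor S k = 0 := by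
  have hP : (LinearMap.range φ).FG := Module.Finite.iff_fg.1 (Module.Finite.range φ)
  have hc : ∀ (A B : Type u) [AddCommGroup A] [AddCommGroup B] [Module R0 A] [Module R0 B]
    (g : A →ₗ[R0] B) (x : S ⊗[R0] A), g.rTensor S (TensorProduct.comm R0 S A x) =
      TensorProduct.comm R0 S B (g.lTensor S x) := by
    intro A B _ _ _ _ g x
    induction x using TensorProduct.induction_on with
    | zero => simp
    | add x y hx hy => simp only [map_add, hx, hy]
    | tmul a b => simp
  have ht : (LinearMap.range φ).subtype.rTensor S
      (TensorProduct.comm R0 S _ (φ.rangeRestrict.lTensor S k)) = 0 := by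
    rw [hc, ← LinearMap.comp_apply, ← LinearMap.lTensor_comp]
    change TensorProduct.comm R0 S V (φ.lTensor S k) = 0
    rw [hk, map_zero]
  obtain ⟨Q, hPQ, hQ, h0⟩ := TensorProduct.eq_zero_of_fg_of_subtype_eq_zero hP ht
  refine ⟨Q, Submodule.inclusion hPQ ∘ₗ φ.rangeRestrict, hQ, rfl, ?_⟩
  rw [hc, LinearEquiv.map_eq_zero_iff] at h0
  rw [LinearMap.lTensor_comp, LinearMap.comp_apply, h0]

lemma exists_psi (I : Ideal R0) (C : Subalgebra R0 R)
    (Q : Submodule R0 (I.map (algebraMap R0 R)))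
    (h : ∀ x ∈ Q, ∃ y ∈ I.map (algebraMap R0 C), (y : R) = x) :
    ∃ ψ : Q →ₗ[R0] (I.map (algebraMap R0 C)), ∀ x, (((ψ x : C)) : R) = (x : R) := by
  choose y hy hyx using h
  refine ⟨{ toFun := fun x => ⟨y x x.2, hy x x.2⟩
            map_add' := fun a b => ?_
            map_smul' := fun r a => ?_ }, fun x => hyx x x.2⟩
  · apply Subtype.ext
    apply Subtype.ext
    change ((y _ _ : C) : R) = (y a a.2 : R) + (y b b.2 : R)
    rw [hyx, hyx, hyx]
    rfl
  · apply Subtype.ext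
    apply Subtype.ext
    change ((y _ _ : C) : R) = r • (y a a.2 : R)
    rw [hyx, hyx]
    rfl

lemma kill_one [IsNoetherianRing R0] (I : Ideal R0) (k : S ⊗[R0] I)
    (hk : (iota R I).lTensor S k = 0) :
    ∃ C0 : Subalgebra R0 R, C0.FG ∧ ∀ C : Subalgebra R0 R, C0 ≤ C →
      (iota C I).lTensor S k = 0 := by
  obtain ⟨Q, φ, hQ, hφ, h0⟩ := fg_kill (iota R I) k hk
  obtain ⟨C0, hC0, h⟩ := mem_stage_fg I Q hQ
  refine ⟨C0, hC0, fun C hC => ?_⟩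
  obtain ⟨ψ, hψ⟩ := exists_psi I C Q (h C hC)
  have hψ : iota C I = ψ ∘ₗ φ := by
    refine LinearMap.ext fun a => Subtype.ext (Subtype.ext ?_)
    change _ = ((ψ (φ a) : C) : R)
    rw [hψ]
    have := LinearMap.congr_fun hφ a
    change ((φ a : Q) : (I.map (algebraMap R0 R))) = _ at this
    rw [this]
    rfl
  rw [hψ, LinearMap.lTensor_comp, LinearMap.comp_apply, h0, map_zero]

lemma kill_all [IsNoetherianRing R0] [Algebra.FiniteType R0 S] [Module.Flat R (R ⊗[R0] S)]
    (I : Ideal R0) : ∃ C0 : Subalgebra R0 R, C0.FG ∧ ∀ C : Subalgebra R0 R, C0 ≤ C →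
      ∀ k : S ⊗[R0] I, I.subtype.lTensor S k = 0 → (iota C I).lTensor S k = 0 := by
  classical
  have : IsNoetherianRing S := Algebra.FiniteType.isNoetherianRing R0 S
  have : Module.Finite R0 I := inferInstance
  obtain ⟨s, hs⟩ : (LinearMap.ker (I.subtype.baseChange S)).FG := IsNoetherian.noetherian _
  have hsk : ∀ k ∈ s, I.subtype.lTensor S k = 0 := fun k hk => by
    have : k ∈ LinearMap.ker (I.subtype.baseChange S) := hs ▸ Submodule.subset_span hk
    exact this
  choose! C0 hC0 h using fun k hk => kill_one (R := R) (S := S) I k hk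
  refine ⟨s.sup fun k => if k ∈ s then C0 k else ⊥, ?_, fun C hC k hk => ?_⟩
  · refine Finset.sup_induction Subalgebra.fg_bot (fun _ h1 _ h2 => h1.sup h2) (fun x hx => ?_)
    rw [if_pos hx]
    exact hC0 x (kill_R I x (hsk x hx))
  · have hk' : k ∈ LinearMap.ker (I.subtype.baseChange S) := hk
    rw [← hs] at hk'
    change (iota C I).baseChange S k = 0
    induction hk' using Submodule.span_induction with
    | mem x hx =>
      have h1 := Finset.le_sup (f := fun k => if k ∈ s then C0 k else ⊥) hx
      rw [if_pos (by exact hx)] at h1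
      exact h x (kill_R I x (hsk x hx)) C (h1.trans hC)
    | zero => rw [map_zero]
    | add a b ha' hb' ha hb =>
      rw [hs] at ha' hb'
      rw [map_add, ha ha', hb hb', add_zero]
    | smul r a ha' ha =>
      rw [hs] at ha'
      rw [map_smul, ha ha', smul_zero]

/-- every kernel element vanishes locally at primes containing `I` -/
def Good (C T : Type u) [CommRing C] [CommRing T] [Algebra C T] (I : Ideal T) : Prop :=
  ∀ (J : Ideal C) (z : T ⊗[C] J), J.subtype.lTensor T z = 0 →
    ∀ q : Ideal T, q.IsPrime → I ≤ q → ∃ s : T, s ∉ q ∧ s • z = 0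

lemma Good.flat {C T : Type u} [CommRing C] [CommRing T] [Algebra C T] {I : Ideal T}
    (h : Good C T I) (hI : I = ⊥) : Module.Flat C T := by
  rw [Module.Flat.iff_lTensor_injective']
  intro J
  rw [injective_iff_map_eq_zero]
  intro z hz
  by_contra hne
  let an : Ideal T := LinearMap.ker (LinearMap.toSpanSingleton T _ z)
  have han : an ≠ ⊤ := fun hh => hne (by
    have : (1 : T) ∈ an := hh ▸ trivial
    rw [LinearMap.mem_ker, LinearMap.toSpanSingleton_apply, one_smul] at this
    exact this)
  obtain ⟨q, hq, hle⟩ := Ideal.exists_le_maximal an han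
  obtain ⟨s, hs, hsz⟩ := h J z hz q hq.isPrime (by simp [hI])
  exact hs (hle hsz)

variable (R0 R S) in
/-- no bad primes over `V(I)`. -/
def Stat (I : Ideal R0) : Prop :=
  ∃ C0 : Subalgebra R0 R, C0.FG ∧ ∀ C : Subalgebra R0 R, C0 ≤ C → C.FG →
    Good C (C ⊗[R0] S) (I.map (algebraMap R0 (C ⊗[R0] S)))

lemma stat_all [IsNoetherianRing R0] [Algebra.FiniteType R0 S] [Module.Flat R (R ⊗[R0] S)]
    (I : Ideal R0) : Stat R0 R S I := by
  refine IsNoetherian.induction (P := fun I : Ideal R0 => Stat R0 R S I) ?_ I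
  clear I
  intro (I : Ideal R0) ih
  by_cases hI : I.IsPrime
  · obtain ⟨f, hf, hR⟩ := exists_RFlat R0 S I
    obtain ⟨C1, h1, h1'⟩ := kill_all (R := R) (S := S) I
    have hlt : I < I ⊔ Ideal.span {f} := by
      refine lt_of_le_of_ne le_sup_left fun h => hf ?_
      rw [h]
      exact Ideal.mem_sup_right (Ideal.mem_span_singleton_self f)
    obtain ⟨C2, h2, h2'⟩ := ih _ hlt
    refine ⟨C1 ⊔ C2, h1.sup h2, fun C hC hfg J z hz q hq hle => ?_⟩
    by_cases hfq : algebraMap R0 (C ⊗[R0] S) f ∈ q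
    · refine h2' C (le_sup_right.trans hC) hfg J z hz q hq ?_
      rw [Ideal.map_sup, Ideal.map_span, Set.image_singleton]
      exact sup_le hle ((Ideal.span_singleton_le_iff_mem _).2 hfq)
    · have hQ := (qflat_of_kill hR (h1' C (le_sup_left.trans hC))).qt
      have : Algebra.FiniteType R0 C := C.fg_iff_finiteType.1 hfg
      have : IsNoetherianRing C := Algebra.FiniteType.isNoetherianRing R0 C
      have : IsNoetherianRing (C ⊗[R0] S) := Algebra.FiniteType.isNoetherianRing C _
      refine hQ.local_crit J z hz q ?_ ?_
      · rw [Ideal.map_map, ← IsScalarTower.algebraMap_eq]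
        exact hle
      · rw [← IsScalarTower.algebraMap_apply]
        exact hfq
  · rcases Ideal.not_isPrime_iff.1 hI with rfl | ⟨a, ha, b, hb, hab⟩
    · refine ⟨⊥, Subalgebra.fg_bot, fun C _ _ J z hz q hq hle => ?_⟩
      rw [Ideal.map_top] at hle
      exact absurd (top_le_iff.1 hle) hq.ne_top
    · have hlt : ∀ a ∉ I, I < I ⊔ Ideal.span {a} := by
        intro f hf
        refine lt_of_le_of_ne le_sup_left fun h => hf ?_
        rw [h]
        exact Ideal.mem_sup_right (Ideal.mem_span_singleton_self f)
      obtain ⟨C1, h1, h1'⟩ := ih _ (hlt a ha)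
      obtain ⟨C2, h2, h2'⟩ := ih _ (hlt b hb)
      refine ⟨C1 ⊔ C2, h1.sup h2, fun C hC hfg J z hz q hq hle => ?_⟩
      have hm : algebraMap R0 (C ⊗[R0] S) a * algebraMap R0 (C ⊗[R0] S) b ∈ q := by
        rw [← map_mul]
        exact hle (Ideal.mem_map_of_mem _ hab)
      rcases hq.mem_or_mem hm with h | h
      · refine h1' C (le_sup_left.trans hC) hfg J z hz q hq ?_
        rw [Ideal.map_sup, Ideal.map_span, Set.image_singleton]
        exact sup_le hle ((Ideal.span_singleton_le_iff_mem _).2 h)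
      · refine h2' C (le_sup_right.trans hC) hfg J z hz q hq ?_
        rw [Ideal.map_sup, Ideal.map_span, Set.image_singleton]
        exact sup_le hle ((Ideal.span_singleton_le_iff_mem _).2 h)

variable (R0 R S) in
theorem exists_flat [IsNoetherianRing R0] [Algebra.FiniteType R0 S] [Module.Flat R (R ⊗[R0] S)] :
    ∃ C0 : Subalgebra R0 R, C0.FG ∧ ∀ C : Subalgebra R0 R, C0 ≤ C → C.FG →
      Module.Flat C (C ⊗[R0] S) := by
  obtain ⟨C0, h0, h⟩ := stat_all (R := R) (S := S) (⊥ : Ideal R0)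
  refine ⟨C0, h0, fun C hC hfg => ?_⟩
  exact (h C hC hfg).flat Ideal.map_bot

end
end IFP

namespace IFP
universe u

lemma nontriv_field {R0 k K S : Type u} [CommRing R0] [Field k] [Field K] [CommRing S]
    [Algebra R0 k] [Algebra R0 K] [Algebra R0 S] (φ : k →ₐ[R0] K) :
    Nontrivial (k ⊗[R0] S) ↔ Nontrivial (K ⊗[R0] S) := by
  let _ : Algebra k K := φ.toRingHom.toAlgebra
  have : IsScalarTower R0 k K := IsScalarTower.of_algebraMap_eq (fun x => (φ.commutes x).symm)
  have e := (TensorProduct.AlgebraTensorModule.cancelBaseChange R0 k K K S).toEquiv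
  constructor
  · intro h
    have : Nontrivial (K ⊗[k] (k ⊗[R0] S)) := inferInstance
    exact e.symm.nontrivial
  · intro h
    have : Nontrivial (K ⊗[k] (k ⊗[R0] S)) := e.nontrivial
    by_contra hn
    rw [not_nontrivial_iff_subsingleton] at hn
    have : Subsingleton (K ⊗[k] (k ⊗[R0] S)) := inferInstance
    exact not_subsingleton _ this

lemma range_iff {R0 C S : Type u} [CommRing R0] [CommRing C] [CommRing S]
    [Algebra R0 C] [Algebra R0 S] (p : PrimeSpectrum C) :
    p ∈ Set.range (PrimeSpectrum.comap (algebraMap C (C ⊗[R0] S))) ↔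
      Nontrivial (p.asIdeal.ResidueField ⊗[R0] S) := by
  rw [← PrimeSpectrum.nontrivial_iff_mem_rangeComap]
  exact (TensorProduct.AlgebraTensorModule.cancelBaseChange R0 C C p.asIdeal.ResidueField S).toEquiv.nontrivial_congr

lemma range_comap_iff {R0 C C' S : Type u} [CommRing R0] [CommRing C] [CommRing C'] [CommRing S]
    [Algebra R0 C] [Algebra R0 C'] [Algebra R0 S] (φ : C →ₐ[R0] C') (p : PrimeSpectrum C') :
    PrimeSpectrum.comap φ.toRingHom p ∈ Set.range (PrimeSpectrum.comap (algebraMap C (C ⊗[R0] S))) ↔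
    p ∈ Set.range (PrimeSpectrum.comap (algebraMap C' (C' ⊗[R0] S))) := by
  rw [range_iff, range_iff]
  exact nontriv_field (Ideal.ResidueField.mapₐ _ _ φ rfl)

lemma mem_stage' {R0 R : Type u} [CommRing R0] [CommRing R] [Algebra R0 R]
    (C1 : Subalgebra R0 R) (I : Ideal C1) (x : R) (hx : x ∈ I.map C1.val.toRingHom) :
    ∃ C0 : Subalgebra R0 R, C0.FG ∧ ∀ (C : Subalgebra R0 R) (h : C1 ≤ C), C0 ≤ C →
      ∃ y ∈ I.map (Subalgebra.inclusion h).toRingHom, (y : R) = x := by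
  induction hx using Submodule.span_induction with
  | mem x hx =>
    obtain ⟨a, ha, rfl⟩ := hx
    exact ⟨⊥, Subalgebra.fg_bot, fun C _ _ => ⟨_, Ideal.mem_map_of_mem _ ha, rfl⟩⟩
  | zero => exact ⟨⊥, Subalgebra.fg_bot, fun C _ _ => ⟨0, zero_mem _, rfl⟩⟩
  | add a b _ _ ha hb =>
    obtain ⟨C1, h1, h1'⟩ := ha
    obtain ⟨C2, h2, h2'⟩ := hb
    refine ⟨C1 ⊔ C2, h1.sup h2, fun C h hC => ?_⟩
    obtain ⟨y, hy, rfl⟩ := h1' C h (le_sup_left.trans hC)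
    obtain ⟨y', hy', rfl⟩ := h2' C h (le_sup_right.trans hC)
    exact ⟨y + y', add_mem hy hy', rfl⟩
  | smul r a _ ha =>
    obtain ⟨C1, h1, h1'⟩ := ha
    refine ⟨C1 ⊔ Algebra.adjoin R0 {r}, h1.sup (by simpa using Subalgebra.fg_adjoin_finset (R := R0) {r}),
      fun C h hC => ?_⟩
    obtain ⟨y, hy, rfl⟩ := h1' C h (le_sup_left.trans hC)
    have hr : r ∈ C := hC (Algebra.mem_sup_right (Algebra.subset_adjoin (by simp)))
    exact ⟨⟨r, hr⟩ * y, Ideal.mul_mem_left _ _ hy, rfl⟩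

theorem exists_ff (R0 R S : Type u) [CommRing R0] [CommRing R] [Algebra R0 R] [CommRing S]
    [Algebra R0 S] [IsNoetherianRing R0] [Algebra.FiniteType R0 S]
    [Module.FaithfullyFlat R (R ⊗[R0] S)] :
    ∃ C0 : Subalgebra R0 R, C0.FG ∧ ∀ C : Subalgebra R0 R, C0 ≤ C → C.FG →
      Module.FaithfullyFlat C (C ⊗[R0] S) := by
  obtain ⟨C1, hC1, h1⟩ := exists_flat R0 R S
  have : Module.Flat C1 (C1 ⊗[R0] S) := h1 C1 le_rfl hC1
  have : Algebra.FinitePresentation R0 S := Algebra.FinitePresentation.of_finiteType.1 inferInstance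
  have hopen : IsOpen (Set.range (PrimeSpectrum.comap (algebraMap C1 (C1 ⊗[R0] S)))) :=
    (PrimeSpectrum.isOpenMap_comap_of_hasGoingDown_of_finitePresentation).isOpen_range
  obtain ⟨J, hJ⟩ := (PrimeSpectrum.isOpen_iff _).1 hopen
  have hJ' : ∃ J : Ideal C1, ∀ p : PrimeSpectrum C1,
      p ∈ Set.range (PrimeSpectrum.comap (algebraMap C1 (C1 ⊗[R0] S))) ↔ ¬ J ≤ p.asIdeal := by
    refine ⟨Ideal.span J, fun p => ?_⟩
    rw [← not_iff_not, ← Set.mem_compl_iff, hJ, not_not, PrimeSpectrum.mem_zeroLocus,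
      Ideal.span_le]
  clear hJ J
  obtain ⟨J, hJ⟩ := hJ'
  have htop : (1 : R) ∈ J.map C1.val.toRingHom := by
    rw [← Ideal.eq_top_iff_one]
    by_contra hne
    obtain ⟨m, hm, hle⟩ := Ideal.exists_le_maximal _ hne
    have h2 := (range_comap_iff (S := S) C1.val ⟨m, hm.isPrime⟩).2
      (PrimeSpectrum.comap_surjective_of_faithfullyFlat _)
    exact (hJ _).1 h2 (Ideal.map_le_iff_le_comap.1 hle)
  obtain ⟨C2, hC2, h2⟩ := mem_stage' C1 J 1 htop
  refine ⟨C1 ⊔ C2, hC1.sup hC2, fun C hC hfg => ?_⟩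
  have hle : C1 ≤ C := le_sup_left.trans hC
  have : Module.Flat C (C ⊗[R0] S) := h1 C hle hfg
  obtain ⟨y, hy, hy1⟩ := h2 C hle (le_sup_right.trans hC)
  obtain rfl : y = 1 := Subtype.ext hy1
  apply Module.FaithfullyFlat.of_comap_surjective
  intro p
  change p ∈ Set.range _
  rw [← range_comap_iff (S := S) (Subalgebra.inclusion hle) p, hJ]
  intro h3
  exact p.2.ne_top ((Ideal.eq_top_iff_one _).2 (Ideal.map_le_iff_le_comap.2 h3 hy))

end IFP

namespace IFP

lemma fp_of_ft (R S M : Type*) [CommRing R] [CommRing S] [Algebra R S] [AddCommGroup M]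
    [Module R M] [Module S M] [IsScalarTower R S M] [Algebra.FiniteType R S]
    [Module.FinitePresentation R M] : Module.FinitePresentation S M := by
  classical
  let μ : S ⊗[R] M →ₗ[S] M := TensorProduct.AlgebraTensorModule.lift
    ((LinearMap.toSpanSingleton S (M →ₗ[R] M) LinearMap.id))
  have hμ : ∀ s m, μ (s ⊗ₜ m) = s • m := by intro s m; simp [μ]
  obtain ⟨Y, hY⟩ := Algebra.FiniteType.out (R := R) (A := S)
  obtain ⟨X, hX⟩ := Module.Finite.fg_top (R := R) (M := M)
  let G : Finset (S ⊗[R] M) := Finset.image₂ (fun y m => y ⊗ₜ[R] m - 1 ⊗ₜ[R] (y • m)) Y X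
  have h1 : ∀ (s : S) (m : M), s ⊗ₜ[R] m - 1 ⊗ₜ[R] (s • m) ∈ Submodule.span S (G : Set (S ⊗[R] M)) := by
    intro s
    have hs : s ∈ Algebra.adjoin R (Y : Set S) := by rw [hY]; trivial
    induction hs using Algebra.adjoin_induction with
    | mem y hy =>
      intro m
      have hm : m ∈ Submodule.span R (X : Set M) := by rw [hX]; trivial
      induction hm using Submodule.span_induction with
      | mem m hm => exact Submodule.subset_span (Finset.mem_coe.2 (Finset.mem_image₂_of_mem hy hm))
      | zero => simp
      | add a b _ _ ha hb =>
        have := add_mem ha hb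
        simp only [smul_add, TensorProduct.tmul_add]
        convert this using 1
        abel
      | smul r a _ ha =>
        have := Submodule.smul_of_tower_mem _ r ha
        rw [smul_comm y r a]
        simpa [smul_sub] using this
    | algebraMap r =>
      intro m
      rw [algebraMap_smul, TensorProduct.tmul_smul, TensorProduct.smul_tmul', Algebra.algebraMap_eq_smul_one, sub_self]
      exact zero_mem _
    | add a b _ _ ha hb =>
      intro m
      have := add_mem (ha m) (hb m)
      simp only [add_smul, TensorProduct.tmul_add, TensorProduct.add_tmul]
      convert this using 1
      abel
    | mul a b _ _ ha hb =>
      intro m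
      have := add_mem (Submodule.smul_mem _ a (hb m)) (ha (b • m))
      convert this using 1
      simp [smul_sub, TensorProduct.smul_tmul', mul_smul]
  have h2 : ∀ z, z - 1 ⊗ₜ[R] μ z ∈ Submodule.span S (G : Set (S ⊗[R] M)) := by
    intro z
    induction z using TensorProduct.induction_on with
    | zero => simp
    | tmul s m => rw [hμ]; exact h1 s m
    | add a b ha hb =>
      have := add_mem ha hb
      simp only [map_add, TensorProduct.tmul_add]
      convert this using 1
      abel
  refine Module.finitePresentation_of_surjective μ (fun m => ⟨1 ⊗ₜ m, by simp [hμ]⟩) ⟨G, ?_⟩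
  apply le_antisymm
  · rw [Submodule.span_le]
    intro z hz
    obtain ⟨y, hy, m, hm, rfl⟩ := Finset.mem_image₂.1 (Finset.mem_coe.1 hz)
    simp [hμ]
  · intro z hz
    have := h2 z
    rw [LinearMap.mem_ker.1 hz] at this
    simpa using this

lemma fp_descent (R T M : Type*) [CommRing R] [CommRing T] [Algebra R T] [AddCommGroup M]
    [Module R M] [Module.FaithfullyFlat R T] [Module.FinitePresentation T (T ⊗[R] M)] :
    Module.FinitePresentation R M := by
  have : Module.Finite R M := Module.Finite.of_finite_tensorProduct_of_faithfullyFlat T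
  obtain ⟨n, f, hf⟩ := Module.Finite.exists_fin' R M
  refine Module.finitePresentation_of_surjective f hf ?_
  rw [← Module.Finite.iff_fg]
  have hsurj : Function.Surjective (f.baseChange T) := LinearMap.lTensor_surjective T hf
  have hker := Module.FinitePresentation.fg_ker (f.baseChange T) hsurj
  have hinj : Function.Injective ((LinearMap.ker f).subtype.baseChange T) :=
    Module.Flat.lTensor_preserves_injective_linearMap (M := T) _ Subtype.val_injective
  have hex : LinearMap.ker (f.baseChange T) = LinearMap.range ((LinearMap.ker f).subtype.baseChange T) := by
    ext x
    exact lTensor_exact T (LinearMap.exact_subtype_ker_map f) hf x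
  rw [hex, ← Module.Finite.iff_fg] at hker
  have : Module.Finite T (T ⊗[R] LinearMap.ker f) :=
    Module.Finite.equiv (LinearEquiv.ofInjective _ hinj).symm
  exact Module.Finite.of_finite_tensorProduct_of_faithfullyFlat T

lemma ifp_of_fp (A D B M : Type*) [CommRing A] [CommRing D] [CommRing B] [Algebra A D]
    [Algebra A B] [Algebra.FinitePresentation A D] [AddCommGroup M] [Module B M]
    [Algebra D B] [IsScalarTower A D B] [Module D M] [IsScalarTower D B M]
    [Module.FinitePresentation D M] : Module.IntrinsicallyFinitePresentation A B M := by
  obtain ⟨n, f, hf, hker⟩ := Algebra.FinitePresentation.out (R := A) (A := D)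
  refine ⟨n, (IsScalarTower.toAlgHom A D B).comp f, ?_⟩
  let _ : Module (MvPolynomial (Fin n) A) M :=
    Module.compHom M ((IsScalarTower.toAlgHom A D B).comp f).toRingHom
  let _ : Algebra (MvPolynomial (Fin n) A) D := f.toRingHom.toAlgebra
  have : IsScalarTower (MvPolynomial (Fin n) A) D M := by
    refine ⟨fun x y z => ?_⟩
    change (f x * y) • z = (algebraMap D B (f x)) • y • z
    rw [mul_smul, algebraMap_smul]
  have : Module.FinitePresentation (MvPolynomial (Fin n) A) D :=
    Module.finitePresentation_of_surjective (Algebra.linearMap (MvPolynomial (Fin n) A) D) hf hker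
  exact Module.FinitePresentation.trans (MvPolynomial (Fin n) A) M D

/-- main step over a finitely presented `D`. -/
lemma main_step (A D T B B' M : Type*) [CommRing A] [CommRing D] [CommRing T] [CommRing B]
    [CommRing B'] [Algebra A D] [Algebra A B] [Algebra A T] [Algebra D T] [IsScalarTower A D T]
    [Algebra D B] [IsScalarTower A D B] [Algebra B B'] [Algebra T B'] [Algebra D B']
    [Algebra A B'] [IsScalarTower D T B'] [IsScalarTower D B B'] [IsScalarTower A T B']
    [Algebra.IsPushout D T B B'] [Algebra.FinitePresentation A D]
    [Algebra.FinitePresentation D T] [Module.FaithfullyFlat D T]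
    [AddCommGroup M] [Module B M]
    (n : ℕ) (f : MvPolynomial (Fin n) A →ₐ[A] B')
    (hf : let _ : Module (MvPolynomial (Fin n) A) (B' ⊗[B] M) := Module.compHom _ f.toRingHom
      Module.FinitePresentation (MvPolynomial (Fin n) A) (B' ⊗[B] M))
    (hx : ∀ i, ∃ t : T, algebraMap T B' t = f (MvPolynomial.X i)) :
    Module.IntrinsicallyFinitePresentation A B M := by
  choose t ht using hx
  let g : MvPolynomial (Fin n) A →ₐ[A] T := MvPolynomial.aeval t
  have hg : f = (IsScalarTower.toAlgHom A T B').comp g := by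
    ext i; simp [g, ht]
  let _ : Module D M := Module.compHom M (algebraMap D B)
  have : IsScalarTower D B M := IsScalarTower.of_algebraMap_smul (fun _ _ => rfl)
  let _ : Module (MvPolynomial (Fin n) A) (B' ⊗[B] M) := Module.compHom _ f.toRingHom
  have hf : Module.FinitePresentation (MvPolynomial (Fin n) A) (B' ⊗[B] M) := hf
  let _ : Algebra (MvPolynomial (Fin n) A) T := g.toRingHom.toAlgebra
  have : IsScalarTower A (MvPolynomial (Fin n) A) T := IsScalarTower.of_algebraMap_eq
    (fun x => (g.commutes x).symm)
  have : IsScalarTower (MvPolynomial (Fin n) A) T (B' ⊗[B] M) := by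
    refine IsScalarTower.of_algebraMap_smul (fun x z => ?_)
    change g x • z = f x • z
    rw [hg]
    exact (algebraMap_smul B' (g x) z).symm
  have : Algebra.FiniteType A T := Algebra.FiniteType.trans (S := D) inferInstance inferInstance
  have : Algebra.FiniteType (MvPolynomial (Fin n) A) T :=
    Algebra.FiniteType.of_restrictScalars_finiteType A _ _
  have : Module.FinitePresentation T (B' ⊗[B] M) := fp_of_ft (MvPolynomial (Fin n) A) T _
  have : Module.FinitePresentation T (T ⊗[D] M) :=
    Module.FinitePresentation.of_equiv (Algebra.IsPushout.cancelBaseChange D T B B' M)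
  have : Module.FinitePresentation D M := fp_descent D T M
  exact ifp_of_fp A D B M

end IFP

namespace IFP

lemma step2 (A C S1 D B B' M : Type*) [CommRing A] [CommRing C] [CommRing S1] [CommRing D]
    [CommRing B] [CommRing B'] [Algebra C S1] [Algebra C D] [Algebra A D] [Algebra A B]
    [Algebra C B] [Algebra D B] [IsScalarTower A D B] [IsScalarTower C D B]
    [Algebra B B'] [Algebra A B'] [IsScalarTower A B B'] [Algebra C B'] [IsScalarTower C B B']
    [Algebra S1 B'] [IsScalarTower C S1 B'] [Algebra.IsPushout C B S1 B']
    [Algebra.FinitePresentation A D] [Algebra.FinitePresentation C S1]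
    [Module.FaithfullyFlat C S1]
    [AddCommGroup M] [Module B M]
    (n : ℕ) (f : MvPolynomial (Fin n) A →ₐ[A] B')
    (hf : let _ : Module (MvPolynomial (Fin n) A) (B' ⊗[B] M) := Module.compHom _ f.toRingHom
      Module.FinitePresentation (MvPolynomial (Fin n) A) (B' ⊗[B] M))
    (hx : ∀ i, ∃ t : S1, algebraMap S1 B' t = f (MvPolynomial.X i)) :
    Module.IntrinsicallyFinitePresentation A B M := by
  let _ : Algebra D B' := ((algebraMap B B').comp (algebraMap D B)).toAlgebra
  have : IsScalarTower D B B' := IsScalarTower.of_algebraMap_eq (fun _ => rfl)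
  have : IsScalarTower C D B' := IsScalarTower.of_algebraMap_eq (fun x => by
    rw [IsScalarTower.algebraMap_apply D B B', ← IsScalarTower.algebraMap_apply C D B,
      ← IsScalarTower.algebraMap_apply C B B'])
  let φ : D ⊗[C] S1 →ₐ[D] B' := Algebra.TensorProduct.lift (Algebra.ofId D B')
    (IsScalarTower.toAlgHom C S1 B') (fun _ _ => Commute.all _ _)
  let _ : Algebra (D ⊗[C] S1) B' := φ.toRingHom.toAlgebra
  have hφ : ∀ d s, algebraMap (D ⊗[C] S1) B' (d ⊗ₜ s) = algebraMap D B' d * algebraMap S1 B' s :=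
    fun d s => Algebra.TensorProduct.lift_tmul _ _ _ _ _
  have : IsScalarTower D (D ⊗[C] S1) B' := IsScalarTower.of_algebraMap_eq
    (fun x => (φ.commutes x).symm)
  let _ : Algebra S1 (D ⊗[C] S1) := Algebra.TensorProduct.rightAlgebra
  have : IsScalarTower S1 (D ⊗[C] S1) B' := IsScalarTower.of_algebraMap_eq (fun x => by
    change _ = algebraMap (D ⊗[C] S1) B' (1 ⊗ₜ x)
    rw [hφ]; simp)
  have : IsScalarTower C (D ⊗[C] S1) B' := IsScalarTower.of_algebraMap_eq (fun x => by
    rw [IsScalarTower.algebraMap_apply C D (D ⊗[C] S1),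
      ← IsScalarTower.algebraMap_apply D (D ⊗[C] S1) B', ← IsScalarTower.algebraMap_apply])
  have : IsScalarTower A D (D ⊗[C] S1) := inferInstance
  have : IsScalarTower A (D ⊗[C] S1) B' := IsScalarTower.of_algebraMap_eq (fun x => by
    rw [IsScalarTower.algebraMap_apply A D (D ⊗[C] S1),
      ← IsScalarTower.algebraMap_apply D (D ⊗[C] S1) B', IsScalarTower.algebraMap_apply D B B',
      ← IsScalarTower.algebraMap_apply A D B, ← IsScalarTower.algebraMap_apply A B B'])
  have hp : Algebra.IsPushout C D S1 (D ⊗[C] S1) := inferInstance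
  have : Algebra.IsPushout D B (D ⊗[C] S1) B' :=
    (Algebra.IsPushout.comp_iff C D S1 (D ⊗[C] S1) (T := B)).1 inferInstance
  have : Algebra.IsPushout D (D ⊗[C] S1) B B' := this.symm
  refine main_step A D (D ⊗[C] S1) B B' M n f hf (fun i => ?_)
  obtain ⟨t, ht⟩ := hx i
  exact ⟨1 ⊗ₜ t, by rw [hφ, ht]; simp⟩

lemma step3 (A C S1 B B' M : Type*) [CommRing A] [CommRing C] [CommRing S1]
    [CommRing B] [CommRing B'] [Algebra C S1] [Algebra A B]
    [Algebra C B]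
    [Algebra B B'] [Algebra A B'] [IsScalarTower A B B'] [Algebra C B'] [IsScalarTower C B B']
    [Algebra S1 B'] [IsScalarTower C S1 B'] [Algebra.IsPushout C B S1 B']
    [Algebra.FiniteType ℤ C] [Algebra.FinitePresentation C S1]
    [Module.FaithfullyFlat C S1]
    [AddCommGroup M] [Module B M]
    (n : ℕ) (f : MvPolynomial (Fin n) A →ₐ[A] B')
    (hf : let _ : Module (MvPolynomial (Fin n) A) (B' ⊗[B] M) := Module.compHom _ f.toRingHom
      Module.FinitePresentation (MvPolynomial (Fin n) A) (B' ⊗[B] M))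
    (hx : ∀ i, ∃ t : S1, algebraMap S1 B' t = f (MvPolynomial.X i)) :
    Module.IntrinsicallyFinitePresentation A B M := by
  have : Algebra.FinitePresentation ℤ C := Algebra.FinitePresentation.of_finiteType.1 inferInstance
  let _ : Algebra C (A ⊗[ℤ] C) := Algebra.TensorProduct.rightAlgebra
  let φ : A ⊗[ℤ] C →ₐ[A] B := Algebra.TensorProduct.lift (Algebra.ofId A B)
    (algebraMap C B).toIntAlgHom (fun _ _ => Commute.all _ _)
  let _ : Algebra (A ⊗[ℤ] C) B := φ.toRingHom.toAlgebra
  have : IsScalarTower A (A ⊗[ℤ] C) B := IsScalarTower.of_algebraMap_eq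
    (fun x => (φ.commutes x).symm)
  have : IsScalarTower C (A ⊗[ℤ] C) B := IsScalarTower.of_algebraMap_eq (fun x => by
    change _ = φ (1 ⊗ₜ x)
    simp [φ])
  exact step2 A C S1 (A ⊗[ℤ] C) B B' M n f hf hx

end IFP

namespace IFP
universe u v

lemma ff_congr (R T T' : Type*) [CommRing R] [AddCommGroup T] [AddCommGroup T']
    [Module R T] [Module R T'] (e : T ≃ₗ[R] T') [Module.FaithfullyFlat R T] :
    Module.FaithfullyFlat R T' := Module.FaithfullyFlat.of_linearEquiv (M := T) (N := T') (e := e.symm)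

/-- a subalgebra containing lots of things -/
lemma exists_sub (R0 R S : Type u) [CommRing R0] [CommRing R] [Algebra R0 R] [CommRing S]
    [Algebra R0 S] [IsNoetherianRing R0] [Algebra.FiniteType R0 S]
    [Module.FaithfullyFlat R (R ⊗[R0] S)] (n : ℕ) (x : Fin n → R ⊗[R0] S) :
    ∃ C : Subalgebra R0 R, C.FG ∧ Module.FaithfullyFlat C (C ⊗[R0] S) ∧
      ∀ i, ∃ t : C ⊗[R0] S, C.val.toLinearMap.rTensor S t = x i := by
  classical
  obtain ⟨C0, h0, h0'⟩ := exists_ff R0 R S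
  choose C1 h1 t ht using fun i => TensorProduct.Algebra.exists_of_fg (x i)
  have hfg : (C0 ⊔ Finset.univ.sup C1).FG := h0.sup
    (Finset.sup_induction Subalgebra.fg_bot (fun _ h1 _ h2 => h1.sup h2) (fun i _ => h1 i))
  refine ⟨C0 ⊔ Finset.univ.sup C1, hfg, h0' _ le_sup_left hfg, fun i => ?_⟩
  have hle : C1 i ≤ C0 ⊔ Finset.univ.sup C1 :=
    (Finset.le_sup (Finset.mem_univ i)).trans le_sup_right
  refine ⟨(Subalgebra.inclusion hle).toLinearMap.rTensor S (t i), ?_⟩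
  rw [← LinearMap.comp_apply, ← LinearMap.rTensor_comp, ← ht i]
  rfl

lemma exists_model (B : Type u) (B' : Type v) [CommRing B] [CommRing B'] [Algebra B B']
    [Algebra.FinitePresentation B B'] [Module.FaithfullyFlat B B'] :
    ∃ (R0 S0 : Type u) (_ : CommRing R0) (_ : CommRing S0) (_ : Algebra R0 B) (_ : Algebra R0 S0),
      Algebra.FiniteType ℤ R0 ∧ Algebra.FiniteType R0 S0 ∧ Nonempty (B ⊗[R0] S0 ≃ₐ[B] B') := by
  obtain ⟨n, m, ⟨P⟩⟩ := Algebra.Presentation.exists_presentation_fin B B'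
  exact ⟨P.Core, P.ModelOfHasCoeffs P.Core, inferInstance, inferInstance, inferInstance,
    inferInstance, inferInstance, inferInstance, ⟨P.tensorModelOfHasCoeffsEquiv P.Core⟩⟩

lemma pushout_of_equiv {C S1 B B' : Type*} [CommRing C] [CommRing S1] [CommRing B] [CommRing B']
    [Algebra C S1] [Algebra C B] [Algebra B B'] [Algebra C B'] [IsScalarTower C B B']
    [Algebra S1 B'] [IsScalarTower C S1 B'] (e : B ⊗[C] S1 ≃ₐ[B] B')
    (he : ∀ z, e (1 ⊗ₜ z) = algebraMap S1 B' z) : Algebra.IsPushout C B S1 B' := by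
  let _ : Algebra S1 (B ⊗[C] S1) := Algebra.TensorProduct.rightAlgebra
  refine Algebra.IsPushout.of_equiv (S' := B ⊗[C] S1) e ?_
  ext z
  exact he z

/-- packaging -/
lemma step4 {R0 S0 : Type u} {A : Type*} {B : Type u} {B' M : Type*} [CommRing R0] [CommRing S0] [CommRing A]
    [CommRing B] [CommRing B'] [Algebra R0 B] [Algebra R0 S0] [Algebra A B]
    [Algebra B B'] [Algebra A B'] [IsScalarTower A B B']
    [Algebra.FiniteType ℤ R0] [Algebra.FiniteType R0 S0] [Module.FaithfullyFlat B B']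
    (e : B ⊗[R0] S0 ≃ₐ[B] B')
    [AddCommGroup M] [Module B M]
    (n : ℕ) (f : MvPolynomial (Fin n) A →ₐ[A] B')
    (hf : let _ : Module (MvPolynomial (Fin n) A) (B' ⊗[B] M) := Module.compHom _ f.toRingHom
      Module.FinitePresentation (MvPolynomial (Fin n) A) (B' ⊗[B] M)) :
    Module.IntrinsicallyFinitePresentation A B M := by
  have : IsNoetherianRing R0 := Algebra.FiniteType.isNoetherianRing ℤ R0
  have : Algebra.FinitePresentation R0 S0 := Algebra.FinitePresentation.of_finiteType.1 inferInstance
  have : Module.FaithfullyFlat B (B ⊗[R0] S0) := ff_congr B B' _ e.symm.toLinearEquiv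
  obtain ⟨C, hfg, hff, hx⟩ := exists_sub R0 B S0 n (fun i => e.symm (f (MvPolynomial.X i)))
  have : Algebra.FiniteType R0 C := C.fg_iff_finiteType.1 hfg
  have : Algebra.FiniteType ℤ C := Algebra.FiniteType.trans (S := R0) inferInstance inferInstance
  have : IsScalarTower C B B' := inferInstance
  let ψ : C ⊗[R0] S0 →ₐ[R0] B ⊗[R0] S0 := Algebra.TensorProduct.map C.val (AlgHom.id R0 S0)
  let _ : Algebra (C ⊗[R0] S0) B' := (e.toRingHom.comp ψ.toRingHom).toAlgebra
  have hψ : ∀ z, algebraMap (C ⊗[R0] S0) B' z = e (ψ z) := fun _ => rfl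
  have : IsScalarTower C (C ⊗[R0] S0) B' := IsScalarTower.of_algebraMap_eq (R := C) (S := C ⊗[R0] S0) (A := B') (fun c => by
    rw [hψ]
    have : ψ (algebraMap C (C ⊗[R0] S0) c) = algebraMap B _ (algebraMap C B c) := by
      simp [ψ, Algebra.TensorProduct.algebraMap_apply]
    rw [this, e.commutes]
    rfl)
  let e' : B ⊗[C] (C ⊗[R0] S0) ≃ₐ[B] B' :=
    (Algebra.TensorProduct.cancelBaseChange R0 C B B S0).trans e
  have : Algebra.IsPushout C B (C ⊗[R0] S0) B' := by
    refine pushout_of_equiv e' (fun z => ?_)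
    change e (Algebra.TensorProduct.cancelBaseChange R0 C B B S0 (1 ⊗ₜ z)) = e (ψ z)
    congr 1
    induction z using TensorProduct.induction_on with
    | zero => simp
    | add x y hx hy => rw [TensorProduct.tmul_add, map_add, map_add, hx, hy]
    | tmul c s =>
      simp [ψ, Algebra.smul_def]
  refine step3 A C (C ⊗[R0] S0) B B' M n f hf (fun i => ?_)
  obtain ⟨t, ht⟩ := hx i
  refine ⟨t, ?_⟩
  rw [hψ, ← e.apply_symm_apply (f (MvPolynomial.X i)), ← ht]
  rfl

end IFP

/-- Let `A` be a commutative ring, `B` an `A`-algebra, `M` a `B`-module, and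
`B'` a `B`-algebra of finite presentation that is faithfully flat over `B` (an `A`-algebra via
composition). If `M ⊗[B] B'` (written here, following Mathlib's convention for base change, as
`B' ⊗[B] M`), viewed as a `B'`-module, is intrinsically of finite presentation over `A`, then
`M` is intrinsically of finite presentation over `A`. -/
theorem Module.IntrinsicallyFinitePresentation.of_baseChange_faithfullyFlat
    (A B B' M : Type*) [CommRing A] [CommRing B] [CommRing B'] [Algebra A B]
    [Algebra B B'] [Algebra A B'] [IsScalarTower A B B'] [Algebra.FinitePresentation B B']
    [Module.FaithfullyFlat B B']
    [AddCommGroup M] [Module B M]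
    (h : Module.IntrinsicallyFinitePresentation A B' (B' ⊗[B] M)) :
    Module.IntrinsicallyFinitePresentation A B M := by
  obtain ⟨n, f, hf⟩ := h
  obtain ⟨R0, S0, _, _, _, _, _, _, ⟨e⟩⟩ := IFP.exists_model B B'
  exact IFP.step4 e n f hf
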